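/- arXiv:1909.07295 — 8 statements merged into one kernel-verified Lean document; each statement's English description precedes it below -/
import Mathlib

section
/- Let 0<α<1, 0<λ<1, ε>0, C>0, and let p≥1 be an integer. Let f̂:ℝ→ℝ and ĝ:ℝ³→ℝ be measurable functions satisfying 0 ≤ f̂(ω) ≤ C·e^{−|ω|^α} for all ω∈ℝ and 0 ≤ ĝ(k) ≤ C·e^{−ε‖k‖^λ} for all k∈ℝ³. Define G₀(k,q) = f̂(‖q‖+‖k‖)·ĝ(q+k) and, recursively, G_{m+1}(k,q) = ∫_{ℝ³} ‖ℓ‖^p · f̂(‖q‖−‖ℓ‖) · ĝ(q−ℓ) · G_m(k,ℓ) dℓ. Then for every m≥0 there exists a polynomial Q_m of degree at most m·p with nonnegative coefficients, independent of k and q, such that |G_m(k,q)| ≤ Q_m(‖q‖) · e^{−(‖k‖+‖q‖)^α − ε‖k+q‖^λ} for all k,q ∈ ℝ³. -/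
open Real MeasureTheory

lemma aux_gain (s : ℝ) (hs : 0 < s) (hs1 : s < 1) (x y : ℝ) (hx : 0 ≤ x) (hxy : x ≤ y) :
    (2 - 2 ^ s) * x ^ s + (x + y) ^ s ≤ x ^ s + y ^ s := by
  rcases hx.eq_or_lt with h0 | h0
  · subst h0
    simp [Real.zero_rpow hs.ne']
  have hy : 0 < y := lt_of_lt_of_le h0 hxy
  have hc := (Real.concaveOn_rpow hs.le hs1.le).2
  have hxm : x ∈ Set.Ici (0 : ℝ) := hx
  have hym : x + y ∈ Set.Ici (0 : ℝ) := by
    simp only [Set.mem_Ici]; positivity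
  have ht0 : 0 ≤ x / y := by positivity
  have ht1 : 0 ≤ 1 - x / y := by
    have := (div_le_one hy).2 hxy
    linarith
  have h1 := hc hxm hym ht0 ht1 (by ring)
  have h2 := hc hxm hym ht1 ht0 (by ring)
  simp only [smul_eq_mul] at h1 h2
  have e1 : x / y * x + (1 - x / y) * (x + y) = y := by field_simp; ring
  have e2 : (1 - x / y) * x + x / y * (x + y) = 2 * x := by field_simp; ring
  rw [e1] at h1
  rw [e2, Real.mul_rpow (by norm_num) hx] at h2
  nlinarith

lemma aux_gain_min (s : ℝ) (hs : 0 < s) (hs1 : s < 1) (x y : ℝ) (hx : 0 ≤ x) (hy : 0 ≤ y) :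
    (2 - 2 ^ s) * (min x y) ^ s + (x + y) ^ s ≤ x ^ s + y ^ s := by
  rcases le_total x y with h | h
  · rw [min_eq_left h]; exact aux_gain s hs hs1 x y hx h
  · rw [min_eq_right h, add_comm x y, add_comm (x ^ s)]; exact aux_gain s hs hs1 y x hy h

lemma aux_pos (s : ℝ) (hs1 : s < 1) : 0 < 2 - (2 : ℝ) ^ s := by
  have := Real.rpow_lt_rpow_of_exponent_lt (x := 2) (by norm_num) hs1
  rw [Real.rpow_one] at this
  linarith

lemma aux_bdd (s c : ℝ) (hs : 0 < s) (hc : 0 < c) (N : ℕ) :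
    ∃ K : ℝ, 0 < K ∧ ∀ t : ℝ, 0 ≤ t → (1 + t) ^ N * Real.exp (-(c * t ^ s)) ≤ K := by
  obtain ⟨M, hM⟩ := exists_nat_ge ((N : ℝ) / s)
  refine ⟨2 ^ N * (1 + M.factorial / c ^ M), by positivity, fun t ht => ?_⟩
  rw [Real.exp_neg, ← div_eq_mul_inv, div_le_iff₀ (Real.exp_pos _)]
  have hu : 0 ≤ c * t ^ s := by positivity
  have he1 : 1 ≤ Real.exp (c * t ^ s) := Real.one_le_exp hu
  have he2 := Real.pow_div_factorial_le_exp (c * t ^ s) hu M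
  rcases le_total t 1 with h | h
  · calc (1 + t) ^ N ≤ 2 ^ N := by gcongr; linarith
      _ = 2 ^ N * 1 * 1 := by ring
      _ ≤ _ := by
        gcongr
        have : 0 ≤ (M.factorial : ℝ) / c ^ M := by positivity
        linarith
  · have hNM : (N : ℝ) ≤ s * M := by
      rw [div_le_iff₀ hs] at hM; linarith
    have h1 : t ^ N ≤ (t ^ s) ^ M := by
      rw [← Real.rpow_natCast, ← Real.rpow_natCast (t ^ s), ← Real.rpow_mul ht]
      exact Real.rpow_le_rpow_of_exponent_le h hNM
    have h2 : (t ^ s) ^ M ≤ M.factorial / c ^ M * Real.exp (c * t ^ s) := by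
      rw [div_le_iff₀ (by positivity), mul_pow] at he2
      rw [div_mul_eq_mul_div, le_div_iff₀ (by positivity)]
      linarith
    calc (1 + t) ^ N ≤ (2 * t) ^ N := by gcongr; linarith
      _ = 2 ^ N * t ^ N := by rw [mul_pow]
      _ ≤ 2 ^ N * (M.factorial / c ^ M * Real.exp (c * t ^ s)) := by
        gcongr; exact h1.trans h2
      _ ≤ 2 ^ N * ((1 + M.factorial / c ^ M) * Real.exp (c * t ^ s)) := by
        gcongr; linarith
      _ = _ := by ring

lemma aux_int (s c : ℝ) (hs : 0 < s) (hc : 0 < c) :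
    Integrable (fun u : EuclideanSpace ℝ (Fin 3) => Real.exp (-(c * ‖u‖ ^ s))) := by
  obtain ⟨K, hK, hb⟩ := aux_bdd s c hs hc 4
  have hi : Integrable (fun u : EuclideanSpace ℝ (Fin 3) => (1 + ‖u‖) ^ (-(4 : ℝ))) :=
    integrable_one_add_norm (by simp; norm_num)
  refine (hi.const_mul K).mono' ?_ (Filter.Eventually.of_forall fun u => ?_)
  · have : Measurable (fun u : EuclideanSpace ℝ (Fin 3) => Real.exp (-(c * ‖u‖ ^ s))) := by
      fun_prop
    exact this.aestronglyMeasurable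
  · have h := hb ‖u‖ (norm_nonneg u)
    have hp : 0 < 1 + ‖u‖ := by positivity
    rw [Real.norm_eq_abs, abs_of_pos (Real.exp_pos _), Real.rpow_neg hp.le,
      ← div_eq_mul_inv, le_div_iff₀ (by positivity)]
    have e : (1 + ‖u‖) ^ (4 : ℝ) = (1 + ‖u‖) ^ (4 : ℕ) := by
      rw [← Real.rpow_natCast]; norm_num
    rw [e]; linarith

/-- Growth bound for the iterated functions `G_m` arising in the moment recursion for
space- and time-averaged stress tensors: `|G_m(k,q)| ≤ Q_m(‖q‖) e^{−(‖k‖+‖q‖)^α − ε‖k+q‖^λ}`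
with `Q_m` a polynomial of degree at most `m·p` with nonnegative coefficients. -/
theorem iterate_growth_bound
    (α lam ε C : ℝ) (hα : 0 < α) (hα1 : α < 1) (hlam : 0 < lam) (hlam1 : lam < 1)
    (hε : 0 < ε) (hC : 0 < C) (p : ℕ) (hp : 1 ≤ p)
    (fhat : ℝ → ℝ) (ghat : EuclideanSpace ℝ (Fin 3) → ℝ)
    (hfmeas : Measurable fhat) (hgmeas : Measurable ghat)
    (hf : ∀ ω : ℝ, 0 ≤ fhat ω ∧ fhat ω ≤ C * Real.exp (-(|ω| ^ α)))
    (hg : ∀ k : EuclideanSpace ℝ (Fin 3), 0 ≤ ghat k ∧ ghat k ≤ C * Real.exp (-(ε * ‖k‖ ^ lam)))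
    (G : ℕ → EuclideanSpace ℝ (Fin 3) → EuclideanSpace ℝ (Fin 3) → ℝ)
    (hG0 : ∀ k q, G 0 k q = fhat (‖q‖ + ‖k‖) * ghat (q + k))
    (hGrec : ∀ m k q, G (m + 1) k q =
      ∫ ℓ : EuclideanSpace ℝ (Fin 3),
        ‖ℓ‖ ^ p * fhat (‖q‖ - ‖ℓ‖) * ghat (q - ℓ) * G m k ℓ) :
    ∀ m : ℕ, ∃ Q : Polynomial ℝ,
      Q.natDegree ≤ m * p ∧ (∀ i, 0 ≤ Q.coeff i) ∧
      ∀ k q : EuclideanSpace ℝ (Fin 3),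
        |G m k q| ≤ Q.eval ‖q‖ * Real.exp (-((‖k‖ + ‖q‖) ^ α) - ε * ‖k + q‖ ^ lam) := by
  suffices H : ∀ m : ℕ, ∃ A : ℝ, 0 ≤ A ∧ ∀ k q : EuclideanSpace ℝ (Fin 3),
      |G m k q| ≤ A * (1 + ‖q‖) ^ (m * p) *
        Real.exp (-((‖k‖ + ‖q‖) ^ α) - ε * ‖k + q‖ ^ lam) by
    intro m
    obtain ⟨A, hA, h⟩ := H m
    refine ⟨Polynomial.C A * (1 + Polynomial.X) ^ (m * p), ?_, ?_, ?_⟩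
    · refine (Polynomial.natDegree_C_mul_le _ _).trans ?_
      refine Polynomial.natDegree_pow_le_of_le _ ?_ |>.trans (by simp : (m * p) * 1 ≤ m * p)
      rw [add_comm, ← Polynomial.C_1, Polynomial.natDegree_X_add_C]
    · intro i
      rw [Polynomial.coeff_C_mul, Polynomial.coeff_one_add_X_pow]
      positivity
    · intro k q
      simpa using h k q
  intro m
  induction m with
  | zero =>
    refine ⟨C * C, by positivity, fun k q => ?_⟩
    have h1 := hf (‖q‖ + ‖k‖)
    have h2 := hg (q + k)
    rw [hG0, abs_of_nonneg (mul_nonneg h1.1 h2.1)]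
    rw [abs_of_nonneg (by positivity), add_comm ‖q‖] at h1
    rw [add_comm q k] at h2
    rw [add_comm ‖q‖, add_comm q k, sub_eq_add_neg, Real.exp_add]
    calc _ ≤ (C * Real.exp (-((‖k‖ + ‖q‖) ^ α))) * (C * Real.exp (-(ε * ‖k + q‖ ^ lam))) :=
          mul_le_mul h1.2 h2.2 h2.1 (by positivity)
      _ = _ := by simp; ring
  | succ m ih =>
    obtain ⟨A, hA, ih⟩ := ih
    have hcα := aux_pos α hα1
    have hcl := aux_pos lam hlam1
    set c := 2 - (2 : ℝ) ^ α with hc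
    set d := ε * (2 - (2 : ℝ) ^ lam) with hd
    have hdp : 0 < d := by positivity
    obtain ⟨K, hK, hKb⟩ := aux_bdd α c hα hcα ((m + 1) * p)
    have hI := aux_int lam d hlam hdp
    set I := ∫ u : EuclideanSpace ℝ (Fin 3), Real.exp (-(d * ‖u‖ ^ lam)) with hIdef
    have hI0 : 0 ≤ I := integral_nonneg fun u => (Real.exp_pos _).le
    refine ⟨C * C * A * K * (I + I), by positivity, fun k q => ?_⟩
    have i1 : Integrable (fun l : EuclideanSpace ℝ (Fin 3) => Real.exp (-(d * ‖q - l‖ ^ lam))) :=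
      hI.comp_sub_left q
    have i2 : Integrable (fun l : EuclideanSpace ℝ (Fin 3) => Real.exp (-(d * ‖k + l‖ ^ lam))) :=
      hI.comp_add_left k
    have v1 : ∫ l : EuclideanSpace ℝ (Fin 3), Real.exp (-(d * ‖q - l‖ ^ lam)) = I :=
      integral_sub_left_eq_self (fun u : EuclideanSpace ℝ (Fin 3) =>
        Real.exp (-(d * ‖u‖ ^ lam))) volume q
    have v2 : ∫ l : EuclideanSpace ℝ (Fin 3), Real.exp (-(d * ‖k + l‖ ^ lam)) = I :=
      integral_add_left_eq_self (fun u : EuclideanSpace ℝ (Fin 3) =>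
        Real.exp (-(d * ‖u‖ ^ lam))) k
    set E := Real.exp (-((‖k‖ + ‖q‖) ^ α) - ε * ‖k + q‖ ^ lam) with hE
    set B := C * C * A * K * (1 + ‖q‖) ^ ((m + 1) * p) * E with hB
    have hfin : C * C * A * K * (I + I) * (1 + ‖q‖) ^ ((m + 1) * p) * E
        = ∫ l : EuclideanSpace ℝ (Fin 3),
          B * (Real.exp (-(d * ‖q - l‖ ^ lam)) + Real.exp (-(d * ‖k + l‖ ^ lam))) := by
      rw [integral_const_mul, integral_add i1 i2, v1, v2, hB]; ring
    rw [hfin, hGrec, ← Real.norm_eq_abs]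
    refine norm_integral_le_of_norm_le ((i1.add i2).const_mul B)
      (Filter.Eventually.of_forall fun l => ?_)
    have f1 := hf (‖q‖ - ‖l‖)
    have g1 := hg (q - l)
    have G1 := ih k l
    rw [Real.norm_eq_abs, abs_mul, abs_mul, abs_mul, abs_of_nonneg f1.1, abs_of_nonneg g1.1,
      abs_of_nonneg (by positivity : 0 ≤ ‖l‖ ^ p)]
    set a := |‖q‖ - ‖l‖| with ha
    set b := ‖k‖ + ‖l‖ with hb
    set x := ‖q - l‖ with hx
    set y := ‖k + l‖ with hy
    have ha0 : 0 ≤ a := abs_nonneg _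
    have hb0 : 0 ≤ b := by positivity
    have hx0 : 0 ≤ x := norm_nonneg _
    have hy0 : 0 ≤ y := norm_nonneg _
    have gα := aux_gain_min α hα hα1 a b ha0 hb0
    have gl := aux_gain_min lam hlam hlam1 x y hx0 hy0
    have tα : (‖k‖ + ‖q‖) ^ α ≤ (a + b) ^ α := by
      apply Real.rpow_le_rpow (by positivity) _ hα.le
      have := le_abs_self (‖q‖ - ‖l‖)
      linarith
    have tl : ‖k + q‖ ^ lam ≤ (x + y) ^ lam := by
      apply Real.rpow_le_rpow (by positivity) _ hlam.le
      have : k + q = (q - l) + (k + l) := by abel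
      rw [this]; exact norm_add_le _ _
    set μ := min a b with hμ
    have hμ0 : 0 ≤ μ := le_min ha0 hb0
    have hlμ : ‖l‖ ≤ ‖q‖ + μ := by
      have h1 := neg_abs_le (‖q‖ - ‖l‖)
      have h2 := norm_nonneg k
      have h3 := norm_nonneg q
      rcases min_choice a b with h | h <;> rw [hμ, h] <;> linarith
    have hmin : Real.exp (-(d * (min x y) ^ lam))
        ≤ Real.exp (-(d * x ^ lam)) + Real.exp (-(d * y ^ lam)) := by
      have h1 := Real.exp_pos (-(d * x ^ lam))
      have h2 := Real.exp_pos (-(d * y ^ lam))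
      rcases min_choice x y with h | h <;> rw [h] <;> linarith
    have hpow : ‖l‖ ^ p * (1 + ‖l‖) ^ (m * p)
        ≤ (1 + ‖q‖) ^ ((m + 1) * p) * (1 + μ) ^ ((m + 1) * p) := by
      calc ‖l‖ ^ p * (1 + ‖l‖) ^ (m * p) ≤ (1 + ‖l‖) ^ p * (1 + ‖l‖) ^ (m * p) := by
            gcongr; linarith
        _ = (1 + ‖l‖) ^ ((m + 1) * p) := by rw [← pow_add]; congr 1; ring
        _ ≤ ((1 + ‖q‖) * (1 + μ)) ^ ((m + 1) * p) := by
            gcongr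
            nlinarith [mul_nonneg (norm_nonneg q) hμ0]
        _ = _ := mul_pow _ _ _
    have hexp : Real.exp (-(a ^ α)) * Real.exp (-(ε * x ^ lam)) * Real.exp (-(b ^ α) - ε * y ^ lam)
        ≤ E * Real.exp (-(c * μ ^ α)) * Real.exp (-(d * (min x y) ^ lam)) := by
      rw [hE, ← Real.exp_add, ← Real.exp_add, ← Real.exp_add, ← Real.exp_add]
      apply Real.exp_le_exp.2
      have := mul_le_mul_of_nonneg_left (gl.trans' (add_le_add_right tl _)) hε.le
      rw [hd]
      linarith
    have hE0 : 0 < E := Real.exp_pos _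
    calc ‖l‖ ^ p * fhat (‖q‖ - ‖l‖) * ghat (q - l) * |G m k l|
        ≤ ‖l‖ ^ p * (C * Real.exp (-(a ^ α))) * (C * Real.exp (-(ε * x ^ lam))) *
          (A * (1 + ‖l‖) ^ (m * p) * Real.exp (-(b ^ α) - ε * y ^ lam)) := by
          have := f1.1
          have := g1.1
          gcongr
          · exact f1.2
          · exact g1.2
      _ = C * C * A * (‖l‖ ^ p * (1 + ‖l‖) ^ (m * p)) * (Real.exp (-(a ^ α)) *
          Real.exp (-(ε * x ^ lam)) * Real.exp (-(b ^ α) - ε * y ^ lam)) := by ring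
      _ ≤ C * C * A * ((1 + ‖q‖) ^ ((m + 1) * p) * (1 + μ) ^ ((m + 1) * p)) *
          (E * Real.exp (-(c * μ ^ α)) * Real.exp (-(d * (min x y) ^ lam))) := by
          gcongr
      _ = C * C * A * (1 + ‖q‖) ^ ((m + 1) * p) * E *
          ((1 + μ) ^ ((m + 1) * p) * Real.exp (-(c * μ ^ α))) *
          Real.exp (-(d * (min x y) ^ lam)) := by ring
      _ ≤ C * C * A * (1 + ‖q‖) ^ ((m + 1) * p) * E * K *
          (Real.exp (-(d * x ^ lam)) + Real.exp (-(d * y ^ lam))) := by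
          gcongr
          exact hKb μ hμ0
      _ = _ := by rw [hB]; ring
end

section
/- Let 0<α<1, 0<λ<1, ε>0 and let r≥1 be a real number. For k,q ∈ ℝ³ define L^{(r)}(k,q) = ∫_{ℝ³} ‖ℓ‖^r · e^{−|‖q‖−‖ℓ‖|^α − ε‖q−ℓ‖^λ} · e^{−(‖k‖+‖ℓ‖)^α − ε‖k+ℓ‖^λ} dℓ, and let S_{r,α} = sup{ ℓ^r e^{−(ℓ−q)^α} : q>0, ℓ > 2^{1/r} q }. Then for all k,q ∈ ℝ³, L^{(r)}(k,q) ≤ (8π·Γ(3/λ) / (λ·(ε(1−λ))^{3/λ})) · (2‖q‖^r + S_{r,α}) · e^{−(‖k‖+‖q‖)^α − ε‖k+q‖^λ}. -/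
open Real MeasureTheory

lemma aux_sub (p a b : ℝ) (hp : 0 < p) (hp1 : p < 1) (ha : 0 ≤ a) (hab : a ≤ b) :
    (a + b) ^ p + (1 - p) * a ^ p ≤ a ^ p + b ^ p := by
  rcases eq_or_lt_of_le (ha.trans hab) with hb | hb
  · have : a = 0 := by linarith
    subst this; subst hb
    simp [Real.zero_rpow hp.ne']
  have h1 : (1 + a / b) ^ p ≤ 1 + p * (a / b) :=
    rpow_one_add_le_one_add_mul_self (by have := div_nonneg ha hb.le; linarith) hp.le hp1.le
  have h2 : a / b ≤ (a / b) ^ p := by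
    have h0 : 0 ≤ a / b := div_nonneg ha hb.le
    have h1 : a / b ≤ 1 := (div_le_one hb).2 hab
    simpa using Real.rpow_le_rpow_of_exponent_ge_of_imp h0 h1 hp1.le (by intro _ h; linarith)
  have h3 : (a + b) ^ p = b ^ p * (1 + a / b) ^ p := by
    rw [← Real.mul_rpow hb.le (by positivity)]
    congr 1; field_simp; ring
  have h4 : b ^ p * (a / b) ^ p = a ^ p := by
    rw [← Real.mul_rpow hb.le (by positivity)]
    congr 1; field_simp
  have hbp : 0 < b ^ p := Real.rpow_pos_of_pos hb p
  have h5 : (1 + a / b) ^ p ≤ 1 + p * (a / b) ^ p := by nlinarith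
  have h6 := mul_le_mul_of_nonneg_left h5 hbp.le
  rw [← h3] at h6
  nlinarith

lemma aux_exp (p ε a b c : ℝ) (hp : 0 < p) (hp1 : p < 1) (hε : 0 < ε) (ha : 0 ≤ a) (hb : 0 ≤ b)
    (hc : 0 ≤ c) (hcab : c ≤ a + b) :
    Real.exp (-(ε * a ^ p) - ε * b ^ p) ≤
      (Real.exp (-(ε * (1 - p)) * a ^ p) + Real.exp (-(ε * (1 - p)) * b ^ p)) *
        Real.exp (-(ε * c ^ p)) := by
  have hc' : c ^ p ≤ (a + b) ^ p := Real.rpow_le_rpow hc hcab hp.le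
  rw [add_mul, ← Real.exp_add, ← Real.exp_add]
  rcases le_total a b with h | h
  · have h1 := aux_sub p a b hp hp1 ha h
    have : Real.exp (-(ε * a ^ p) - ε * b ^ p) ≤
        Real.exp (-(ε * (1 - p)) * a ^ p + -(ε * c ^ p)) := by
      apply Real.exp_le_exp.2
      have := mul_le_mul_of_nonneg_left (h1.trans' (add_le_add_left hc' _)) hε.le
      linarith
    linarith [Real.exp_pos (-(ε * (1 - p)) * b ^ p + -(ε * c ^ p))]
  · have h1 := aux_sub p b a hp hp1 hb h
    rw [add_comm b a] at h1
    have : Real.exp (-(ε * a ^ p) - ε * b ^ p) ≤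
        Real.exp (-(ε * (1 - p)) * b ^ p + -(ε * c ^ p)) := by
      apply Real.exp_le_exp.2
      have := mul_le_mul_of_nonneg_left (h1.trans' (add_le_add_left hc' _)) hε.le
      linarith
    linarith [Real.exp_pos (-(ε * (1 - p)) * a ^ p + -(ε * c ^ p))]

lemma aux_bdd_s1 (α r : ℝ) (hα : 0 < α) (hr : 1 ≤ r) :
    BddAbove {x : ℝ | ∃ q' ℓ' : ℝ, 0 < q' ∧ (2:ℝ) ^ (1 / r) * q' < ℓ' ∧
              x = ℓ' ^ r * Real.exp (-((ℓ' - q') ^ α))} := by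
  set A : ℝ := (2:ℝ) ^ (1 / r) with hA
  have hA1 : 1 < A := Real.one_lt_rpow (by norm_num) (by positivity)
  set c : ℝ := 1 - 1 / A with hcdef
  have hc : 0 < c := by
    have : 1 / A < 1 := (div_lt_one (by linarith)).2 hA1
    linarith
  have hs : 0 < r / α := by positivity
  set b : ℝ := c ^ α
  have hb : 0 < b := Real.rpow_pos_of_pos hc α
  refine ⟨((r / α) / b) ^ (r / α), ?_⟩
  rintro x ⟨q, l, hq, hl, rfl⟩
  have hl0 : 0 < l := lt_trans (by positivity) hl
  have h1 : c * l ≤ l - q := by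
    have : q ≤ l / A := by rw [le_div_iff₀ (by linarith)]; linarith
    have h2 : c * l = l - l / A := by rw [hcdef]; ring
    linarith
  have h2 : b * l ^ α ≤ (l - q) ^ α := by
    rw [← Real.mul_rpow hc.le hl0.le]
    exact Real.rpow_le_rpow (by positivity) h1 hα.le
  set t := l ^ α
  have ht : 0 < t := Real.rpow_pos_of_pos hl0 α
  have h3 : l ^ r = t ^ (r / α) := by
    rw [← Real.rpow_mul hl0.le]; congr 1; field_simp
  set s := r / α
  have h4 : (t * b / s) ^ s ≤ Real.exp (b * t) := by
    have : t * b / s ≤ Real.exp (t * b / s) := by linarith [Real.add_one_le_exp (t * b / s)]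
    calc _ ≤ (Real.exp (t * b / s)) ^ s := Real.rpow_le_rpow (by positivity) this hs.le
      _ = _ := by rw [← Real.exp_mul]; congr 1; field_simp
  have h5 : t ^ s = (t * b / s) ^ s * (s / b) ^ s := by
    rw [← Real.mul_rpow (by positivity) (by positivity)]; congr 1; field_simp
  rw [h3, h5]
  calc (t * b / s) ^ s * (s / b) ^ s * Real.exp (-((l - q) ^ α))
      ≤ Real.exp (b * t) * (s / b) ^ s * Real.exp (-(b * t)) := by gcongr
    _ = (s / b) ^ s * (Real.exp (b * t) * Real.exp (-(b * t))) := by ring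
    _ = _ := by rw [← Real.exp_add]; simp

lemma aux_pt (α r k q l : ℝ) (hα : 0 < α) (hα1 : α < 1) (hr : 1 ≤ r)
    (hk : 0 ≤ k) (hq : 0 ≤ q) (hl : 0 ≤ l) :
    l ^ r * Real.exp (-(|q - l| ^ α)) * Real.exp (-((k + l) ^ α)) ≤
      (2 * q ^ r + sSup {x : ℝ | ∃ q' ℓ' : ℝ, 0 < q' ∧ (2:ℝ) ^ (1 / r) * q' < ℓ' ∧
              x = ℓ' ^ r * Real.exp (-((ℓ' - q') ^ α))}) * Real.exp (-((k + q) ^ α)) := by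
  set T := {x : ℝ | ∃ q' ℓ' : ℝ, 0 < q' ∧ (2:ℝ) ^ (1 / r) * q' < ℓ' ∧
              x = ℓ' ^ r * Real.exp (-((ℓ' - q') ^ α))} with hT
  have hbdd : BddAbove T := aux_bdd_s1 α r hα hr
  have hA1 : 1 < (2:ℝ) ^ (1 / r) := Real.one_lt_rpow (by norm_num) (by positivity)
  have hA0 : 0 < (2:ℝ) ^ (1 / r) := by linarith
  have hS : 0 ≤ sSup T := by
    apply Real.sSup_nonneg
    rintro x ⟨q, l, hq, hl, rfl⟩
    have : 0 < l := lt_trans (by positivity) hl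
    positivity
  rcases le_or_gt l ((2:ℝ) ^ (1 / r) * q) with h | h
  · have h1 : l ^ r ≤ 2 * q ^ r := by
      calc l ^ r ≤ ((2:ℝ) ^ (1 / r) * q) ^ r := Real.rpow_le_rpow hl h (by linarith)
        _ = _ := by
          rw [Real.mul_rpow hA0.le hq, ← Real.rpow_mul (by norm_num), one_div,
            inv_mul_cancel₀ (by linarith), Real.rpow_one]
    have h2 : (k + q) ^ α ≤ |q - l| ^ α + (k + l) ^ α := by
      calc (k + q) ^ α ≤ (|q - l| + (k + l)) ^ α :=
            Real.rpow_le_rpow (by positivity) (by linarith [le_abs_self (q - l)]) hα.le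
        _ ≤ _ := Real.rpow_add_le_add_rpow (abs_nonneg _) (by positivity) hα.le hα1.le
    rw [mul_assoc, ← Real.exp_add]
    have : Real.exp (-|q - l| ^ α + -(k + l) ^ α) ≤ Real.exp (-(k + q) ^ α) :=
      Real.exp_le_exp.2 (by linarith)
    apply mul_le_mul _ this (Real.exp_pos _).le (by positivity)
    linarith
  · have hql : q ≤ l := by nlinarith
    have hl0 : 0 < l := lt_of_le_of_lt (by positivity) h
    have h1 : l ^ r * Real.exp (-(|q - l| ^ α)) ≤ sSup T := by
      rw [abs_sub_comm, abs_of_nonneg (by linarith)]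
      rcases eq_or_lt_of_le hq with h0 | h0
      · subst h0
        have hc : Filter.Tendsto (fun x : ℝ => l ^ r * Real.exp (-((l - x) ^ α)))
            (nhdsWithin 0 (Set.Ioi 0)) (nhds (l ^ r * Real.exp (-((l - 0) ^ α)))) := by
          apply Filter.Tendsto.mono_left _ nhdsWithin_le_nhds
          have : Continuous (fun x : ℝ => l ^ r * Real.exp (-((l - x) ^ α))) := by
            have : Continuous (fun x : ℝ => (l - x) ^ α) :=
              (continuous_const.sub continuous_id).rpow_const (fun x => Or.inr hα.le)
            fun_prop
          exact this.tendsto 0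
        apply le_of_tendsto hc
        have : ∀ᶠ x : ℝ in nhdsWithin 0 (Set.Ioi 0), x < l / (2:ℝ) ^ (1 / r) :=
          nhdsWithin_le_nhds (Iio_mem_nhds (by positivity))
        filter_upwards [this, self_mem_nhdsWithin] with x hx hx0
        refine le_csSup hbdd ⟨x, l, hx0, ?_, rfl⟩
        rw [lt_div_iff₀ hA0] at hx
        linarith
      · exact le_csSup hbdd ⟨q, l, h0, h, rfl⟩
    have h2 : Real.exp (-(k + l) ^ α) ≤ Real.exp (-(k + q) ^ α) := by
      apply Real.exp_le_exp.2
      have := Real.rpow_le_rpow (show 0 ≤ k + q by positivity) (by linarith : k + q ≤ k + l) hα.le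
      linarith
    apply mul_le_mul _ h2 (Real.exp_pos _).le (by positivity)
    have : 0 ≤ q ^ r := by positivity
    linarith

lemma aux_integrable (p b : ℝ) (hp : 0 < p) (hb : 0 < b) :
    Integrable (fun x : EuclideanSpace ℝ (Fin 3) => Real.exp (-b * ‖x‖ ^ p)) := by
  refine (integrable_fun_norm_addHaar (volume : Measure (EuclideanSpace ℝ (Fin 3)))
    (f := fun y : ℝ => Real.exp (-b * y ^ p))).2 ?_
  have h := integrableOn_rpow_mul_exp_neg_mul_rpow (p := p) (s := 2) (b := b) (by norm_num) hp hb
  simpa using h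

lemma aux_integral (p b : ℝ) (hp : 0 < p) (hb : 0 < b) :
    ∫ x : EuclideanSpace ℝ (Fin 3), Real.exp (-b * ‖x‖ ^ p) =
      4 * π * Real.Gamma (3 / p) / (p * b ^ (3 / p)) := by
  rw [integral_fun_norm_addHaar (volume : Measure (EuclideanSpace ℝ (Fin 3)))
    (fun y : ℝ => Real.exp (-b * y ^ p))]
  have h := integral_rpow_mul_exp_neg_mul_rpow (p := p) (q := 2) (b := b) hp (by norm_num) hb
  have h3 : (2 + 1 : ℝ) = 3 := by norm_num
  rw [h3, neg_div, Real.rpow_neg hb.le] at h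
  simp only [Real.rpow_two] at h
  have hv : (volume : Measure (EuclideanSpace ℝ (Fin 3))).real (Metric.ball 0 1) = π * 4 / 3 := by
    rw [measureReal_def, EuclideanSpace.volume_ball_fin_three]
    simp [ENNReal.toReal_ofReal (show 0 ≤ π * 4 / 3 by positivity)]
  simp only [finrank_euclideanSpace, Fintype.card_fin, smul_eq_mul, nsmul_eq_mul, hv,
    Nat.add_one_sub_one, show 3 - 1 = 2 from rfl, h]
  have : 0 < b ^ (3 / p) := Real.rpow_pos_of_pos hb _
  push_cast
  field_simp

/-- Bound on the integral `L^{(r)}(k,q)` in terms of `S_{r,α}` and the Gamma function. -/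
theorem L_integral_bound
    (α lam ε r : ℝ) (hα : 0 < α) (hα1 : α < 1) (hlam : 0 < lam) (hlam1 : lam < 1)
    (hε : 0 < ε) (hr : 1 ≤ r)
    (k q : EuclideanSpace ℝ (Fin 3)) :
    (∫ ℓ : EuclideanSpace ℝ (Fin 3),
        ‖ℓ‖ ^ r * Real.exp (-(|‖q‖ - ‖ℓ‖| ^ α) - ε * ‖q - ℓ‖ ^ lam)
          * Real.exp (-((‖k‖ + ‖ℓ‖) ^ α) - ε * ‖k + ℓ‖ ^ lam))
      ≤ (8 * π * Real.Gamma (3 / lam) / (lam * (ε * (1 - lam)) ^ (3 / lam)))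
        * (2 * ‖q‖ ^ r +
            sSup {x : ℝ | ∃ q' ℓ' : ℝ, 0 < q' ∧ (2:ℝ) ^ (1 / r) * q' < ℓ' ∧
              x = ℓ' ^ r * Real.exp (-((ℓ' - q') ^ α))})
        * Real.exp (-((‖k‖ + ‖q‖) ^ α) - ε * ‖k + q‖ ^ lam) := by
  have hpt := fun l : EuclideanSpace ℝ (Fin 3) =>
    aux_pt α r ‖k‖ ‖q‖ ‖l‖ hα hα1 hr (norm_nonneg _) (norm_nonneg _) (norm_nonneg _)
  set S := sSup {x : ℝ | ∃ q' ℓ' : ℝ, 0 < q' ∧ (2:ℝ) ^ (1 / r) * q' < ℓ' ∧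
              x = ℓ' ^ r * Real.exp (-((ℓ' - q') ^ α))}
  have hb : 0 < ε * (1 - lam) := mul_pos hε (by linarith)
  set b := ε * (1 - lam) with hbdef
  have hex := fun l : EuclideanSpace ℝ (Fin 3) =>
    aux_exp lam ε ‖q - l‖ ‖k + l‖ ‖k + q‖ hlam hlam1 hε (norm_nonneg _) (norm_nonneg _)
      (norm_nonneg _) (by
        calc ‖k + q‖ = ‖(q - l) + (k + l)‖ := by congr 1; abel
          _ ≤ _ := norm_add_le _ _)
  simp only [← hbdef] at hex
  set C := (2 * ‖q‖ ^ r + S) * Real.exp (-((‖k‖ + ‖q‖) ^ α)) * Real.exp (-(ε * ‖k + q‖ ^ lam))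
    with hC
  have hi := aux_integrable lam b hlam hb
  have hI := aux_integral lam b hlam hb
  have hi1 : Integrable (fun l : EuclideanSpace ℝ (Fin 3) => Real.exp (-b * ‖q - l‖ ^ lam)) :=
    hi.comp_sub_left q
  have hi2 : Integrable (fun l : EuclideanSpace ℝ (Fin 3) => Real.exp (-b * ‖k + l‖ ^ lam)) :=
    hi.comp_add_left k
  have hI1 : ∫ l : EuclideanSpace ℝ (Fin 3), Real.exp (-b * ‖q - l‖ ^ lam) =
      4 * π * Real.Gamma (3 / lam) / (lam * b ^ (3 / lam)) := by
    rw [← hI]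
    exact integral_sub_left_eq_self
      (fun x : EuclideanSpace ℝ (Fin 3) => Real.exp (-b * ‖x‖ ^ lam)) volume q
  have hI2 : ∫ l : EuclideanSpace ℝ (Fin 3), Real.exp (-b * ‖k + l‖ ^ lam) =
      4 * π * Real.Gamma (3 / lam) / (lam * b ^ (3 / lam)) := by
    rw [← hI]
    exact integral_add_left_eq_self
      (fun x : EuclideanSpace ℝ (Fin 3) => Real.exp (-b * ‖x‖ ^ lam)) k
  calc _ ≤ ∫ l : EuclideanSpace ℝ (Fin 3),
        C * (Real.exp (-b * ‖q - l‖ ^ lam) + Real.exp (-b * ‖k + l‖ ^ lam)) := by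
        apply integral_mono_of_nonneg
        · exact Filter.Eventually.of_forall fun l => by simp only [Pi.zero_apply]; positivity
        · exact (hi1.add hi2).const_mul C
        · refine Filter.Eventually.of_forall fun l => ?_
          have h := mul_le_mul (hpt l) (hex l) (Real.exp_pos _).le
            (le_trans (by positivity) (hpt l))
          refine le_trans (le_of_eq ?_) (h.trans (le_of_eq ?_))
          · simp only [sub_eq_add_neg, Real.exp_add]; ring
          · rw [hC]; ring
    _ = _ := by
        rw [integral_const_mul, integral_add hi1 hi2, hI1, hI2, hC, sub_eq_add_neg, Real.exp_add]
        ring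
end

section
/- Let 0<α<1 and let x, y ∈ ℝ³. Then ‖x‖^α + ‖y‖^α ≥ ‖x+y‖^α + (1−α)·min{‖x‖, ‖y‖}^α, where ‖·‖ is the Euclidean norm on ℝ³. -/
open Real

lemma aux_rpow_add (α a b : ℝ) (hα : 0 < α) (hα1 : α < 1) (hb : 0 ≤ b) (hab : b ≤ a) :
    (a + b) ^ α ≤ a ^ α + α * b ^ α := by
  rcases hb.eq_or_lt with rfl | hb
  · simp [Real.zero_rpow hα.ne']
  have ha : 0 < a := hb.trans_le hab
  have hs : 0 < b / a := div_pos hb ha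
  have hs1 : b / a ≤ 1 := (div_le_one ha).2 hab
  have h1 : (1 + b / a) ^ α ≤ 1 + α * (b / a) :=
    rpow_one_add_le_one_add_mul_self (by linarith) hα.le hα1.le
  have h2 : b / a ≤ (b / a) ^ α := by
    simpa using Real.rpow_le_rpow_of_exponent_ge hs hs1 hα1.le
  have e1 : (a + b) ^ α = a ^ α * (1 + b / a) ^ α := by
    rw [← Real.mul_rpow ha.le (by linarith)]
    congr 1
    field_simp
  have e2 : b ^ α = a ^ α * (b / a) ^ α := by
    rw [← Real.mul_rpow ha.le hs.le]
    congr 1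
    field_simp
  have h3 : (1 + b / a) ^ α ≤ 1 + α * (b / a) ^ α :=
    h1.trans (by gcongr)
  have := mul_le_mul_of_nonneg_left h3 (Real.rpow_nonneg ha.le α)
  rw [e1, e2]
  linarith

/-- Vector-norm strengthening of subadditivity of `t ↦ t^α` for `0 < α < 1` on `ℝ³`. -/
theorem norm_rpow_add_min_le (α : ℝ) (hα : 0 < α) (hα1 : α < 1)
    (x y : EuclideanSpace ℝ (Fin 3)) :
    ‖x + y‖ ^ α + (1 - α) * (min ‖x‖ ‖y‖) ^ α ≤ ‖x‖ ^ α + ‖y‖ ^ α := by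
  have h := Real.rpow_le_rpow (norm_nonneg _) (norm_add_le x y) hα.le
  rcases le_total ‖x‖ ‖y‖ with hxy | hxy
  · rw [min_eq_left hxy]
    have := aux_rpow_add α ‖y‖ ‖x‖ hα hα1 (norm_nonneg _) hxy
    rw [add_comm ‖y‖ ‖x‖] at this
    linarith
  · rw [min_eq_right hxy]
    have := aux_rpow_add α ‖x‖ ‖y‖ hα hα1 (norm_nonneg _) hxy
    linarith
end

section
/- Let 0<α<1 and let k, q, ℓ be nonnegative real numbers. Then |q−ℓ|^α + (k+ℓ)^α ≥ (k+q)^α + (1−α)·min{|q−ℓ|, k+ℓ}^α. In particular, e^{−|q−ℓ|^α − (k+ℓ)^α} ≤ e^{−(k+q)^α}. -/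
open Real

theorem aux_le (α x y : ℝ) (hα : 0 < α) (hα1 : α < 1) (hx : 0 ≤ x) (hxy : x ≤ y) :
    (x + y) ^ α ≤ y ^ α + α * x ^ α := by
  rcases hx.eq_or_lt with rfl | hx'
  · simp [Real.zero_rpow hα.ne']
  have hy : 0 < y := lt_of_lt_of_le hx' hxy
  have ht : 0 < x / y := div_pos hx' hy
  have ht1 : x / y ≤ 1 := (div_le_one hy).2 hxy
  have h1 := rpow_one_add_le_one_add_mul_self (s := x / y) (by linarith) hα.le hα1.le
  have h2 : x / y ≤ (x / y) ^ α := by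
    simpa using Real.rpow_le_rpow_of_exponent_ge ht ht1 hα1.le
  have e1 : x + y = y * (1 + x / y) := by field_simp; ring
  have e2 : x ^ α = y ^ α * (x / y) ^ α := by
    rw [← Real.mul_rpow hy.le ht.le]; congr 1; field_simp
  rw [e1, Real.mul_rpow hy.le (by linarith), e2]
  have h3 : (1 + x / y) ^ α ≤ 1 + α * (x / y) ^ α := by nlinarith
  have := mul_le_mul_of_nonneg_left h3 (Real.rpow_nonneg hy.le α)
  linarith

theorem aux_min (α x y : ℝ) (hα : 0 < α) (hα1 : α < 1) (hx : 0 ≤ x) (hy : 0 ≤ y) :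
    (x + y) ^ α + (1 - α) * (min x y) ^ α ≤ x ^ α + y ^ α := by
  rcases le_total x y with h | h
  · rw [min_eq_left h]
    linarith [aux_le α x y hα hα1 hx h]
  · rw [min_eq_right h, add_comm x y]
    linarith [aux_le α y x hα hα1 hy h]

/-- For `0 < α < 1` and nonnegative `k, q, ℓ`:
`|q−ℓ|^α + (k+ℓ)^α ≥ (k+q)^α + (1−α)·min{|q−ℓ|, k+ℓ}^α`, and in particular
`e^{−|q−ℓ|^α − (k+ℓ)^α} ≤ e^{−(k+q)^α}`. -/
theorem abs_sub_rpow_add_rpow_ge (α k q ℓ : ℝ) (hα : 0 < α) (hα1 : α < 1)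
    (hk : 0 ≤ k) (hq : 0 ≤ q) (hℓ : 0 ≤ ℓ) :
    (k + q) ^ α + (1 - α) * (min |q - ℓ| (k + ℓ)) ^ α ≤ |q - ℓ| ^ α + (k + ℓ) ^ α ∧
    Real.exp (-(|q - ℓ| ^ α) - (k + ℓ) ^ α) ≤ Real.exp (-((k + q) ^ α)) := by
  have h0 : 0 ≤ k + ℓ := by linarith
  have h1 := aux_min α |q - ℓ| (k + ℓ) hα hα1 (abs_nonneg _) h0
  have h2 : (k + q) ^ α ≤ (|q - ℓ| + (k + ℓ)) ^ α :=
    Real.rpow_le_rpow (by linarith) (by linarith [le_abs_self (q - ℓ)]) hα.le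
  have h3 : 0 ≤ (1 - α) * (min |q - ℓ| (k + ℓ)) ^ α :=
    mul_nonneg (by linarith) (Real.rpow_nonneg (le_min (abs_nonneg _) h0) _)
  exact ⟨by linarith, Real.exp_le_exp.2 (by linarith)⟩
end

section
/- Let 0<λ<α<1 with λ < α/2, and let ε > 0. Define I_N(ε) = ∫₀^∞ q^{N−1} e^{−q^α − ε q^λ} dq for N > 0. Then as N → ∞, I_N(ε) · α · e^{ε(N/α − 1)^{λ/α}} / Γ(N/α) → 1; that is, I_N(ε) ∼ α^{−1} Γ(N/α) e^{−ε(N/α−1)^{λ/α}}. -/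
open Real MeasureTheory Filter

lemma aux_subst (α lam ε N : ℝ) (hα : 0 < α) :
    (∫ q in Set.Ioi (0:ℝ), q ^ (N - 1) * Real.exp (-(q ^ α) - ε * q ^ lam)) * α
      = ∫ t in Set.Ioi (0:ℝ), t ^ (N / α - 1) * Real.exp (-t - ε * t ^ (lam / α)) := by
  rw [← integral_comp_rpow_Ioi_of_pos (g := fun t : ℝ => t ^ (N / α - 1) * Real.exp (-t - ε * t ^ (lam / α))) (p := α) hα, mul_comm, ← integral_const_mul]
  refine setIntegral_congr_fun measurableSet_Ioi fun q hq => ?_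
  have hq : 0 < q := hq
  simp only [smul_eq_mul]
  rw [← rpow_mul hq.le, ← rpow_mul hq.le, mul_div_cancel₀ _ hα.ne']
  have : q ^ (N - 1) = q ^ (α - 1) * q ^ (α * (N / α - 1)) := by
    rw [← rpow_add hq]; congr 1; field_simp; ring
  rw [this]; ring

lemma aux_int_s8 (s : ℝ) (hs : 0 < s) :
    IntegrableOn (fun t : ℝ => t ^ (s - 1) * Real.exp (-t)) (Set.Ioi 0) :=
  (Real.GammaIntegral_convergent hs).congr_fun (fun t _ => mul_comm _ _) measurableSet_Ioi

lemma aux_gamma (s : ℝ) (hs : 0 < s) :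
    ∫ t in Set.Ioi (0:ℝ), t ^ (s - 1) * Real.exp (-t) = Real.Gamma s := by
  rw [Real.Gamma_eq_integral hs]
  exact setIntegral_congr_fun measurableSet_Ioi (fun t _ => mul_comm _ _)

lemma aux_intJ (ε μ m : ℝ) (hm : 0 < m) (hε : 0 < ε) :
    IntegrableOn (fun t : ℝ => t ^ m * Real.exp (-t - ε * t ^ μ)) (Set.Ioi 0) := by
  have h := aux_int_s8 (m + 1) (by linarith)
  simp only [add_sub_cancel_right] at h
  refine Integrable.mono' h ?_ ?_
  · apply Measurable.aestronglyMeasurable; fun_prop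
  · refine (ae_restrict_iff' measurableSet_Ioi).2 (Eventually.of_forall fun t ht => ?_)
    have ht : 0 < t := ht
    rw [Real.norm_of_nonneg (by positivity)]
    gcongr
    have : 0 < ε * t ^ μ := by positivity
    linarith

lemma aux_lower (ε μ m : ℝ) (hm : 0 < m) (hε : 0 < ε) (hμ : 0 < μ) (hμ1 : μ < 1) :
    Real.Gamma (m + 1) * (1 - ε * μ * m ^ (μ - 1)) ≤
      (∫ t in Set.Ioi (0:ℝ), t ^ m * Real.exp (-t - ε * t ^ μ)) * Real.exp (ε * m ^ μ) := by
  have h1 := aux_int_s8 (m + 1) (by linarith)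
  have h2 := aux_int_s8 (m + 2) (by linarith)
  have g1 := aux_gamma (m + 1) (by linarith)
  have g2 := aux_gamma (m + 2) (by linarith)
  have e2 : m + 2 - 1 = m + 1 := by ring
  simp only [add_sub_cancel_right, e2] at h1 h2 g1 g2
  have hG : Real.Gamma (m + 2) = (m + 1) * Real.Gamma (m + 1) := by
    rw [← Real.Gamma_add_one (by positivity)]; congr 1; ring
  set c := ε * μ * m ^ (μ - 1) with hc
  have key : Real.Gamma (m + 1) * (1 - c) =
      ∫ t in Set.Ioi (0:ℝ), ((1 + c * m) * (t ^ m * Real.exp (-t)) - c * (t ^ (m+1) * Real.exp (-t))) := by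
    rw [integral_sub (h1.const_mul _) (h2.const_mul _), integral_const_mul, integral_const_mul, g1, g2, hG]
    ring
  rw [key, ← integral_mul_const]
  refine setIntegral_mono_on ((h1.const_mul _).sub (h2.const_mul _))
    ((aux_intJ ε μ m hm hε).mul_const _) measurableSet_Ioi fun t ht => ?_
  have ht : 0 < t := ht
  have hb : t ^ μ ≤ m ^ μ + μ * m ^ (μ - 1) * (t - m) := by
    have := rpow_one_add_le_one_add_mul_self (s := t / m - 1) (p := μ)
      (by have : 0 < t / m := by positivity
          linarith) hμ.le hμ1.le
    rw [add_sub_cancel, div_rpow ht.le hm.le, div_le_iff₀ (by positivity)] at this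
    refine this.trans_eq ?_
    rw [rpow_sub_one hm.ne']; field_simp
  have hx := Real.add_one_le_exp (-(ε * t ^ μ) + ε * m ^ μ)
  have hb' : 1 + c * m - c * t ≤ Real.exp (-(ε * t ^ μ) + ε * m ^ μ) := by
    refine le_trans ?_ hx
    have := mul_le_mul_of_nonneg_left hb hε.le
    rw [hc]; nlinarith
  have e : t ^ m * Real.exp (-t - ε * t ^ μ) * Real.exp (ε * m ^ μ)
      = t ^ m * Real.exp (-t) * Real.exp (-(ε * t ^ μ) + ε * m ^ μ) := by
    rw [mul_assoc, mul_assoc, ← Real.exp_add, ← Real.exp_add]; congr 2; ring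
  rw [e, rpow_add_one ht.ne']
  have := mul_le_mul_of_nonneg_left hb' (show 0 ≤ t ^ m * Real.exp (-t) by positivity)
  nlinarith

lemma aux_ratio (m p : ℝ) (hp : 0 < p) (hpm : p < m) :
    m ^ p * Real.Gamma (m + 1 - p) ≤ Real.Gamma (m + 1) * Real.exp (p ^ 2 / (m - p)) := by
  have hd : 0 < m - p := by linarith
  have hm : 0 < m := by linarith
  have hs := Real.convexOn_log_Gamma.slope_mono_adjacent (x := m - p) (y := m + 1 - p) (z := m + 1)
    hd (show (0:ℝ) < m + 1 by linarith) (by linarith) (by linarith)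
  have hG : Real.Gamma (m + 1 - p) = (m - p) * Real.Gamma (m - p) := by
    rw [← Real.Gamma_add_one hd.ne']; congr 1; ring
  have hg0 : 0 < Real.Gamma (m - p) := Real.Gamma_pos_of_pos hd
  have hg1 : 0 < Real.Gamma (m + 1 - p) := Real.Gamma_pos_of_pos (by linarith)
  have hg2 : 0 < Real.Gamma (m + 1) := Real.Gamma_pos_of_pos (by linarith)
  have hl : Real.log (Real.Gamma (m + 1 - p)) = Real.log (m - p) + Real.log (Real.Gamma (m - p)) := by
    rw [hG, Real.log_mul hd.ne' hg0.ne']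
  have e1 : m + 1 - p - (m - p) = 1 := by ring
  have e2 : m + 1 - (m + 1 - p) = p := by ring
  simp only [Function.comp, e1, e2, div_one] at hs
  rw [le_div_iff₀ hp] at hs
  have hlog : Real.log m - Real.log (m - p) ≤ p / (m - p) := by
    rw [← Real.log_div hm.ne' hd.ne']
    refine (Real.log_le_sub_one_of_pos (by positivity)).trans_eq ?_
    field_simp; ring
  rw [← Real.log_le_log_iff (by positivity) (by positivity), Real.log_mul (by positivity) (by positivity),
    Real.log_mul (by positivity) (by positivity), Real.log_exp, Real.log_rpow hm]
  have := mul_le_mul_of_nonneg_left hlog hp.le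
  have e3 : p * (p / (m - p)) = p ^ 2 / (m - p) := by ring
  rw [e3] at this
  nlinarith

lemma aux_upper (ε μ m : ℝ) (hm : 0 < m) (hε : 0 < ε) (hμ : 0 < μ)
    (hpm : ε * μ * m ^ μ < m) :
    (∫ t in Set.Ioi (0:ℝ), t ^ m * Real.exp (-t - ε * t ^ μ)) * Real.exp (ε * m ^ μ) ≤
    Real.Gamma (m + 1) * Real.exp ((ε * μ * m ^ μ) ^ 2 / (m - ε * μ * m ^ μ)) := by
  set p := ε * μ * m ^ μ with hp
  have hp0 : 0 < p := by positivity
  refine le_trans ?_ (aux_ratio m p hp0 hpm)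
  have h1 := aux_int_s8 (m + 1 - p) (by linarith)
  rw [← aux_gamma (m + 1 - p) (by linarith), ← integral_mul_const, ← integral_const_mul]
  refine setIntegral_mono_on ((aux_intJ ε μ m hm hε).mul_const _) (h1.const_mul _)
    measurableSet_Ioi fun t ht => ?_
  have ht : 0 < t := ht
  have hb : ε * m ^ μ - ε * t ^ μ ≤ p * (Real.log m - Real.log t) := by
    have h := Real.add_one_le_exp (μ * (Real.log t - Real.log m))
    have e : Real.exp (μ * (Real.log t - Real.log m)) = t ^ μ / m ^ μ := by
      rw [rpow_def_of_pos ht, rpow_def_of_pos hm, ← Real.exp_sub]; congr 1; ring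
    rw [e, le_div_iff₀ (by positivity)] at h
    have := mul_le_mul_of_nonneg_left h hε.le
    rw [hp]; nlinarith
  rw [rpow_def_of_pos ht, rpow_def_of_pos hm p, rpow_def_of_pos ht (m + 1 - p - 1), ← Real.exp_add,
    ← Real.exp_add, ← Real.exp_add, ← Real.exp_add]
  apply Real.exp_le_exp.2
  nlinarith

/-- For `0 < λ < α < 1` with `λ < α/2` and `ε > 0`,
`I_N(ε) = ∫₀^∞ q^{N−1} e^{−q^α − ε q^λ} dq ∼ α⁻¹ Γ(N/α) e^{−ε(N/α−1)^{λ/α}}` as `N → ∞`. -/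
theorem IN_asymptotics_small_lambda
    (α lam ε : ℝ) (hlam : 0 < lam) (hlamα : lam < α) (hα1 : α < 1)
    (hhalf : lam < α / 2) (hε : 0 < ε) :
    Tendsto (fun N : ℝ =>
        (∫ q in Set.Ioi (0:ℝ), q ^ (N - 1) * Real.exp (-(q ^ α) - ε * q ^ lam))
          * α * Real.exp (ε * (N / α - 1) ^ (lam / α)) / Real.Gamma (N / α))
      atTop (nhds 1) := by
  have hα : 0 < α := hlam.trans hlamα
  obtain ⟨μ, hμ⟩ : ∃ μ, μ = lam / α := ⟨_, rfl⟩
  have hμ0 : 0 < μ := by rw [hμ]; positivity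
  have hμ2 : μ < 1 / 2 := by rw [hμ, div_lt_iff₀ hα]; linarith
  have hm : Tendsto (fun N : ℝ => N / α - 1) atTop atTop :=
    tendsto_atTop_add_const_right _ _ (tendsto_id.atTop_div_const hα)
  have t1 : Tendsto (fun m : ℝ => m ^ (μ - 1)) atTop (nhds 0) := by
    have := tendsto_rpow_neg_atTop (y := 1 - μ) (by linarith)
    simpa using this
  have t2 : Tendsto (fun m : ℝ => m ^ (2 * μ - 1)) atTop (nhds 0) := by
    have := tendsto_rpow_neg_atTop (y := 1 - 2 * μ) (by linarith)
    simpa using this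
  have tlow : Tendsto (fun m : ℝ => 1 - ε * μ * m ^ (μ - 1)) atTop (nhds 1) := by
    simpa using (t1.const_mul (ε * μ)).const_sub 1
  have tup : Tendsto (fun m : ℝ => Real.exp ((ε * μ * m ^ μ) ^ 2 / (m - ε * μ * m ^ μ)))
      atTop (nhds 1) := by
    have h : Tendsto (fun m : ℝ => Real.exp (((ε * μ) ^ 2 * m ^ (2 * μ - 1)) / (1 - ε * μ * m ^ (μ - 1))))
        atTop (nhds 1) := by
      have := (Real.continuous_exp.tendsto _).comp ((t2.const_mul ((ε * μ) ^ 2)).div tlow one_ne_zero)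
      simpa [Function.comp_def] using this
    refine h.congr' ?_
    filter_upwards [eventually_gt_atTop 0] with m hm0
    congr 1
    have e1 : m ^ (2 * μ - 1) = (m ^ μ) ^ 2 / m := by
      rw [rpow_sub_one hm0.ne', two_mul, rpow_add hm0, sq]
    rw [e1, rpow_sub_one hm0.ne']
    have e2 : m - ε * μ * m ^ μ = m * (1 - ε * μ * (m ^ μ / m)) := by field_simp
    rw [e2, ← div_div]
    congr 1
    ring
  refine tendsto_of_tendsto_of_tendsto_of_le_of_le' (tlow.comp hm) (tup.comp hm) ?_ ?_
  · filter_upwards [hm.eventually (eventually_gt_atTop 0)] with N hN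
    have hg : 0 < Real.Gamma (N / α) := Real.Gamma_pos_of_pos (by linarith)
    have := aux_lower ε μ (N / α - 1) hN hε hμ0 (by linarith)
    rw [sub_add_cancel] at this
    rw [aux_subst α lam ε N hα, ← hμ, le_div_iff₀ hg, mul_comm]
    exact this
  · filter_upwards [hm.eventually (eventually_gt_atTop 0),
      (tlow.comp hm).eventually (lt_mem_nhds one_pos)] with N hN hN2
    have hg : 0 < Real.Gamma (N / α) := Real.Gamma_pos_of_pos (by linarith)
    have := aux_upper ε μ (N / α - 1) hN hε hμ0 (by
      simp only [Function.comp] at hN2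
      rw [rpow_sub_one hN.ne', ← mul_div_assoc, sub_pos, div_lt_one hN] at hN2
      exact hN2)
    rw [sub_add_cancel] at this
    rw [aux_subst α lam ε N hα, ← hμ, div_le_iff₀ hg, mul_comm (Function.comp _ _ _)]
    exact this
end

section
/- Let 0<α<1 and λ = α/2, and let ε > 0. Define I_N(ε) = ∫₀^∞ q^{N−1} e^{−q^α − ε q^λ} dq for N > 0. Then as N → ∞, I_N(ε) ∼ α^{−1} e^{ε²/8} Γ(N/α) e^{−ε√(N/α − 1)}, i.e., the ratio of the two sides tends to 1. -/
open Real MeasureTheory Filter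

lemma aux_log (t : ℝ) : Tendsto (fun s : ℝ => s ^ 2 * Real.log (1 + t / s) - s * t) atTop
    (nhds (-(t ^ 2 / 2))) := by
  have h0 : Tendsto (fun s : ℝ => 2 * |t| ^ 3 / s) atTop (nhds 0) :=
    tendsto_const_nhds.div_atTop tendsto_id
  rw [tendsto_iff_norm_sub_tendsto_zero]
  refine squeeze_zero' (Eventually.of_forall fun _ => norm_nonneg _) ?_ h0
  filter_upwards [eventually_ge_atTop (2 * |t| + 1)] with s hs
  have hta := abs_nonneg t
  have hs0 : 0 < s := by linarith
  have hu : |-(t / s)| ≤ 1 / 2 := by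
    rw [abs_neg, abs_div, abs_of_pos hs0, div_le_iff₀ hs0]; linarith
  have h := Real.abs_log_sub_add_sum_range_le (x := -(t / s)) (by linarith) 2
  simp only [Finset.sum_range_succ, Finset.sum_range_zero] at h
  norm_num at h
  have hu' : |t / s| ≤ 1 / 2 := by rwa [abs_neg] at hu
  have e1 : s ^ 2 * Real.log (1 + t / s) - s * t - -(t ^ 2 / 2)
      = s ^ 2 * (-(t / s) + (t / s) ^ 2 / 2 + Real.log (1 + t / s)) := by
    field_simp; ring
  rw [e1, Real.norm_eq_abs, abs_mul, abs_of_pos (by positivity : (0:ℝ) < s ^ 2)]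
  have h2 : |t / s| ^ 3 / (1 - |t / s|) ≤ 2 * |t / s| ^ 3 := by
    rw [div_le_iff₀ (by linarith)]
    have : 0 ≤ |t / s| ^ 3 := by positivity
    nlinarith
  have h3 : |-(t / s) + (t / s) ^ 2 / 2 + Real.log (1 + t / s)| ≤ 2 * |t / s| ^ 3 := by
    refine le_trans (le_of_eq ?_) (h.trans h2)
    ring_nf
  calc s ^ 2 * |-(t / s) + (t / s) ^ 2 / 2 + Real.log (1 + t / s)|
      ≤ s ^ 2 * (2 * |t / s| ^ 3) := by gcongr
    _ = 2 * |t| ^ 3 / s := by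
      rw [abs_div, abs_of_pos hs0]; field_simp

noncomputable def auxF (e s t : ℝ) : ℝ :=
  (1 + t / s) ^ (2 * s ^ 2 + 1) * Real.exp (-2 * s * t - t ^ 2 - e * t)

lemma auxF_eq (e s t : ℝ) (hs : 0 < s) (ht : -s < t) :
    auxF e s t = (1 + t / s) *
      Real.exp (2 * (s ^ 2 * Real.log (1 + t / s) - s * t) - t ^ 2 - e * t) := by
  have h1 : 0 < 1 + t / s := by
    have : 1 + t / s = (s + t) / s := by field_simp
    rw [this]; apply div_pos <;> linarith
  rw [auxF, Real.rpow_add_one h1.ne', Real.rpow_def_of_pos h1, mul_right_comm, ← Real.exp_add,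
    mul_comm]
  ring_nf

lemma aux_gauss (e : ℝ) : ∫ t : ℝ, Real.exp (-2 * t ^ 2 - e * t)
    = Real.exp (e ^ 2 / 8) * √(π / 2) := by
  have : ∀ t : ℝ, Real.exp (-2 * t ^ 2 - e * t)
      = Real.exp (e ^ 2 / 8) * (fun u : ℝ => Real.exp (-2 * u ^ 2)) (t + e / 4) := by
    intro t; simp only []; rw [← Real.exp_add]; ring_nf
  simp_rw [this]
  rw [integral_const_mul, integral_add_right_eq_self (fun u : ℝ => Real.exp (-2 * u ^ 2)),
    integral_gaussian]

lemma aux_dom (e : ℝ) : Integrable (fun t : ℝ => 2 * (Real.exp ((e ^ 2 + 1) * 2)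
    * Real.exp (-(1/4) * t ^ 2))) :=
  ((integrable_exp_neg_mul_sq (by norm_num : (0:ℝ) < 1/4)).const_mul _).const_mul _

lemma aux_lim (e : ℝ) : Tendsto (fun s : ℝ => ∫ t in Set.Ioi (-s), auxF e s t) atTop
    (nhds (Real.exp (e ^ 2 / 8) * √(π / 2))) := by
  rw [← aux_gauss]
  simp_rw [← integral_indicator measurableSet_Ioi]
  refine tendsto_integral_filter_of_dominated_convergence _ ?_ ?_ (aux_dom e) ?_
  · refine Eventually.of_forall fun s => ?_
    refine (Measurable.indicator ?_ measurableSet_Ioi).aestronglyMeasurable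
    unfold auxF
    fun_prop
  · filter_upwards [eventually_ge_atTop 1] with s hs
    refine Eventually.of_forall fun t => ?_
    by_cases ht : t ∈ Set.Ioi (-s)
    · rw [Set.indicator_of_mem ht]
      have hs0 : 0 < s := by linarith
      rw [auxF_eq e s t hs0 ht]
      have ht' : -s < t := ht
      have h1 : 0 < 1 + t / s := by
        have : 1 + t / s = (s + t) / s := by field_simp
        rw [this]; apply div_pos <;> linarith
      rw [Real.norm_eq_abs, abs_of_pos (by positivity)]
      have hl : s ^ 2 * Real.log (1 + t / s) - s * t ≤ 0 := by
        have := Real.log_le_sub_one_of_pos h1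
        have h2 : s ^ 2 * Real.log (1 + t / s) ≤ s ^ 2 * (1 + t / s - 1) := by gcongr
        have h3 : s ^ 2 * (1 + t / s - 1) = s * t := by field_simp; ring
        linarith
      have hq : 1 + t / s ≤ 1 + |t| := by
        have : t / s ≤ |t| / s := by gcongr; exact le_abs_self t
        have h4 : |t| / s ≤ |t| := div_le_self (abs_nonneg t) hs
        linarith
      have hq2 : 1 + |t| ≤ Real.exp |t| := by linarith [Real.add_one_le_exp |t|]
      have hb : Real.exp |t| * Real.exp (2 * (s ^ 2 * Real.log (1 + t / s) - s * t) - t ^ 2 - e * t)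
          ≤ Real.exp ((e ^ 2 + 1) * 2) * Real.exp (-(1/4) * t ^ 2) := by
        rw [← Real.exp_add, ← Real.exp_add]
        apply Real.exp_le_exp.mpr
        have := sq_abs t
        nlinarith [sq_nonneg (|t| - 2), sq_nonneg (t + 2 * e), sq_nonneg (t / 2 + e), sq_nonneg (t), sq_nonneg e]
      have : 0 ≤ Real.exp ((e ^ 2 + 1) * 2) * Real.exp (-(1/4) * t ^ 2) := by positivity
      calc _ ≤ Real.exp |t| * Real.exp (2 * (s ^ 2 * Real.log (1 + t / s) - s * t) - t ^ 2 - e * t) := by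
            gcongr; linarith
        _ ≤ _ := by linarith
    · rw [Set.indicator_of_notMem ht]; simp; positivity
  · refine Eventually.of_forall fun t => ?_
    have hlim : Tendsto (fun s : ℝ => (1 + t / s) *
      Real.exp (2 * (s ^ 2 * Real.log (1 + t / s) - s * t) - t ^ 2 - e * t)) atTop
      (nhds ((1 + 0) * Real.exp (2 * (-(t ^ 2 / 2)) - t ^ 2 - e * t))) := by
      refine Tendsto.mul ((tendsto_const_nhds.div_atTop tendsto_id).const_add 1) ?_
      refine (Real.continuous_exp.tendsto _).comp ?_
      exact (((aux_log t).const_mul 2).sub_const _).sub_const _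
    have e2 : (1 + 0) * Real.exp (2 * (-(t ^ 2 / 2)) - t ^ 2 - e * t)
        = Real.exp (-2 * t ^ 2 - e * t) := by ring_nf
    rw [e2] at hlim
    refine hlim.congr' ?_
    filter_upwards [eventually_gt_atTop (|t|)] with s hs
    have hs0 : 0 < s := (abs_nonneg t).trans_lt hs
    have ht : -s < t := (abs_lt.mp hs).1
    rw [Set.indicator_of_mem (show t ∈ Set.Ioi (-s) from ht), auxF_eq e s t hs0 ht]

lemma aux_int_s9 (α e s N : ℝ) (hα : 0 < α) (hs : 0 < s) (hN : s ^ 2 = N / α - 1) :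
    (∫ q in Set.Ioi (0:ℝ), q ^ (N - 1) * Real.exp (-(q ^ α) - e * q ^ (α / 2)))
      = (2 / α * s ^ (2 * s ^ 2 + 1) * Real.exp (-s ^ 2)) * Real.exp (-e * s) *
        ∫ t in Set.Ioi (-s), auxF e s t := by
  have hp : (0:ℝ) < 2 / α := by positivity
  rw [← integral_comp_rpow_Ioi (fun q : ℝ => q ^ (N - 1) * Real.exp (-(q ^ α) - e * q ^ (α / 2)))
    hp.ne']
  have h1 : ∫ y in Set.Ioi (0:ℝ), (|2 / α| * y ^ (2 / α - 1)) •
      ((y ^ (2 / α)) ^ (N - 1) * Real.exp (-((y ^ (2 / α)) ^ α) - e * (y ^ (2 / α)) ^ (α / 2)))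
      = ∫ y in Set.Ioi (0:ℝ), 2 / α * (y ^ (2 * s ^ 2 + 1) * Real.exp (- y ^ 2 - e * y)) := by
    refine setIntegral_congr_fun measurableSet_Ioi fun y hy => ?_
    have hy : 0 < y := hy
    simp only [smul_eq_mul]
    rw [abs_of_pos hp, ← Real.rpow_mul hy.le, ← Real.rpow_mul hy.le, ← Real.rpow_mul hy.le]
    have a1 : 2 / α * α = (2:ℕ) := by push_cast; field_simp
    have a2 : 2 / α * (α / 2) = 1 := by field_simp
    have a3 : y ^ (2 * s ^ 2 + 1) = y ^ (2 / α - 1) * y ^ (2 / α * (N - 1)) := by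
      rw [← Real.rpow_add hy, hN]; congr 1; field_simp; ring
    rw [a1, a2, a3, Real.rpow_natCast, Real.rpow_one]
    ring
  rw [h1]
  have h2 := (measurePreserving_add_right volume s).setIntegral_preimage_emb
    (measurableEmbedding_addRight s)
    (fun y : ℝ => 2 / α * (y ^ (2 * s ^ 2 + 1) * Real.exp (- y ^ 2 - e * y))) (Set.Ioi 0)
  rw [← h2, ← integral_const_mul]
  have h3 : (fun x : ℝ => x + s) ⁻¹' Set.Ioi 0 = Set.Ioi (-s) := by
    ext x; simp [neg_lt_iff_pos_add]
  rw [h3]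
  refine setIntegral_congr_fun measurableSet_Ioi fun t ht => ?_
  have ht : -s < t := ht
  have h4 : 0 < 1 + t / s := by
    have : 1 + t / s = (s + t) / s := by field_simp
    rw [this]; apply div_pos <;> linarith
  simp only [auxF]
  have h5 : t + s = s * (1 + t / s) := by field_simp; ring
  have h6 : Real.exp (-(t + s) ^ 2 - e * (t + s)) = Real.exp (-s ^ 2) * Real.exp (-e * s) *
      Real.exp (-2 * s * t - t ^ 2 - e * t) := by
    rw [← Real.exp_add, ← Real.exp_add]; ring_nf
  rw [h6]
  rw [h5, Real.mul_rpow hs.le h4.le]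
  ring

/-- For `0 < α < 1`, `λ = α/2` and `ε > 0`,
`I_N(ε) = ∫₀^∞ q^{N−1} e^{−q^α − ε q^{α/2}} dq ∼ α⁻¹ e^{ε²/8} Γ(N/α) e^{−ε√(N/α−1)}`
as `N → ∞`. -/
theorem IN_asymptotics_lambda_eq_half_alpha
    (α lam ε : ℝ) (hα : 0 < α) (hα1 : α < 1) (hlam : lam = α / 2) (hε : 0 < ε) :
    Tendsto (fun N : ℝ =>
        (∫ q in Set.Ioi (0:ℝ), q ^ (N - 1) * Real.exp (-(q ^ α) - ε * q ^ lam)) /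
          (α⁻¹ * Real.exp (ε ^ 2 / 8) * Real.Gamma (N / α) *
            Real.exp (-ε * Real.sqrt (N / α - 1))))
      atTop (nhds 1) := by
  subst hlam
  have hpi : 0 < √(π / 2) := Real.sqrt_pos.mpr (by positivity)
  have hs : Tendsto (fun N : ℝ => √(N / α - 1)) atTop atTop :=
    Real.tendsto_sqrt_atTop.comp
      (tendsto_atTop_add_const_right _ (-1) (tendsto_id.atTop_div_const hα))
  have hL := (((aux_lim ε).comp hs).div (((aux_lim 0).comp hs).const_mul (Real.exp (ε ^ 2 / 8)))
    (by positivity))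
  have e0 : Real.exp (ε ^ 2 / 8) * √(π / 2) /
      (Real.exp (ε ^ 2 / 8) * (Real.exp (0 ^ 2 / 8) * √(π / 2))) = 1 := by
    simp only [ne_eq, OfNat.ofNat_ne_zero, not_false_eq_true, zero_pow, zero_div, Real.exp_zero,
      one_mul]
    exact div_self (by positivity)
  rw [e0] at hL
  refine hL.congr' ?_
  filter_upwards [eventually_gt_atTop α, eventually_gt_atTop 0] with N hN hN0
  have hpos : 0 < N / α - 1 := by rw [sub_pos, lt_div_iff₀ hα]; linarith
  set s := √(N / α - 1) with hsdef
  have hs0 : 0 < s := Real.sqrt_pos.mpr hpos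
  have hsq : s ^ 2 = N / α - 1 := Real.sq_sqrt hpos.le
  have i1 := aux_int_s9 α ε s N hα hs0 hsq
  have i2 := aux_int_s9 α 0 s N hα hs0 hsq
  have g := integral_rpow_mul_exp_neg_rpow (p := α) (q := N - 1) hα (by linarith)
  simp only [zero_mul, sub_zero, neg_zero, Real.exp_zero, mul_one] at i2
  rw [i2, sub_add_cancel, one_div] at g
  rw [i1]
  have : α⁻¹ * Real.exp (ε ^ 2 / 8) * Real.Gamma (N / α) * Real.exp (-ε * s)
     = (2 / α * s ^ (2 * s ^ 2 + 1) * Real.exp (-s ^ 2)) * Real.exp (-ε * s) *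
      (Real.exp (ε ^ 2 / 8) * ∫ t in Set.Ioi (-s), auxF 0 s t) := by
    linear_combination (-Real.exp (ε ^ 2 / 8) * Real.exp (-ε * s)) * g
  rw [this, mul_div_mul_left _ _ (by positivity)]
  rfl
end

section
/- Let 0<α<1 and α/2 ≤ λ < 2α/3, let ε > 0, and set β = λ/α. Define I_N(ε) = ∫₀^∞ q^{N−1} e^{−q^α − ε q^λ} dq for N > 0. Then as N → ∞, I_N(ε) ∼ α^{−1} Γ(N/α) · exp(−ε(N/α − 1)^β + (εβ)² (N/α − 1)^{2β−1} / 2), i.e., the ratio of the two sides tends to 1. -/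
open Real MeasureTheory Filter

lemma aux_concave_bound (f : ℝ → ℝ) (hf : ConcaveOn ℝ Set.univ f)
    (h0 : |f 0| ≤ 1/2) (h3 : |f 3 + 9/2| ≤ 1/2) (h3' : |f (-3) + 9/2| ≤ 1/2) (z : ℝ) :
    f z ≤ 20 - |z| := by
  have pos : ∀ g : ℝ → ℝ, ConcaveOn ℝ Set.univ g → |g 0| ≤ 1/2 → |g 3 + 9/2| ≤ 1/2 →
      |g (-3) + 9/2| ≤ 1/2 → ∀ z : ℝ, 0 ≤ z → g z ≤ 20 - z := by
    intro g hg h0 h3 h3' z hz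
    rw [abs_le] at h0 h3 h3'
    by_cases h : z ≤ 3
    · have := hg.2 (Set.mem_univ (-3)) (Set.mem_univ z)
        (by positivity : 0 ≤ z / (z + 3)) (by positivity : 0 ≤ 3 / (z + 3)) (by field_simp)
      have e : (z / (z + 3)) • (-3:ℝ) + (3 / (z + 3)) • z = 0 := by
        simp only [smul_eq_mul]; ring
      rw [e] at this
      simp only [smul_eq_mul] at this
      have h2 : z * g (-3) + 3 * g z ≤ (z + 3) * g 0 := by
        have := mul_le_mul_of_nonneg_left this (by positivity : (0:ℝ) ≤ z + 3)
        have e2 : (z+3) * (z / (z + 3) * g (-3) + 3 / (z + 3) * g z) = z * g (-3) + 3 * g z := by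
          field_simp
        linarith
      nlinarith
    · push Not at h
      have hz0 : 0 < z := by linarith
      have := hg.2 (Set.mem_univ 0) (Set.mem_univ z)
        (by rw [sub_nonneg, div_le_one hz0]; linarith : 0 ≤ 1 - 3 / z)
        (by positivity : 0 ≤ 3 / z) (by ring)
      have e : (1 - 3 / z) • (0:ℝ) + (3 / z) • z = 3 := by
        simp only [smul_eq_mul]; field_simp; ring
      rw [e] at this
      simp only [smul_eq_mul] at this
      have h2 : (z - 3) * g 0 + 3 * g z ≤ z * g 3 := by
        have := mul_le_mul_of_nonneg_left this hz
        have e2 : z * ((1 - 3 / z) * g 0 + 3 / z * g z) = (z - 3) * g 0 + 3 * g z := by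
          field_simp
        linarith
      nlinarith
  rcases le_total 0 z with hz | hz
  · rw [abs_of_nonneg hz]; exact pos f hf h0 h3 h3' z hz
  · rw [abs_of_nonpos hz]
    have := pos (fun x => f (-x)) ⟨convex_univ, fun x _ y _ a b ha hb hab => by
      have := hf.2 (Set.mem_univ (-x)) (Set.mem_univ (-y)) ha hb hab
      have e : -(a • x + b • y) = a • (-x) + b • (-y) := by
        simp only [smul_eq_mul]; ring
      simp only [e]; exact this⟩ (by simpa using h0) h3' (by simpa using h3) (-z) (by linarith)
    simpa using this

/-- shifted variable -/
noncomputable def vv (c β n z : ℝ) : ℝ := -c * n ^ (β - 1) + z * n ^ (-(1/2) : ℝ)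

noncomputable def psi (ε β n z : ℝ) : ℝ :=
  n * vv (ε*β) β n z - n * (exp (vv (ε*β) β n z) - 1) - ε * n ^ β * (exp (β * vv (ε*β) β n z) - 1)
    - (ε*β)^2 * n ^ (2*β-1) / 2

lemma aux_exp_affine (a b : ℝ) : ConvexOn ℝ Set.univ (fun z => exp (a + z * b)) := by
  refine ⟨convex_univ, fun x _ y _ s t hs ht hst => ?_⟩
  have := convexOn_exp.2 (Set.mem_univ (a + x*b)) (Set.mem_univ (a + y*b)) hs ht hst
  have e : a + (s • x + t • y) * b = s • (a + x*b) + t • (a+y*b) := by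
    simp only [smul_eq_mul]; linear_combination (-a) * hst
  simp only [e]; exact this

lemma psi_concave (ε β n : ℝ) (hε : 0 ≤ ε) (hn : 0 < n) :
    ConcaveOn ℝ Set.univ (psi ε β n) := by
  refine ⟨convex_univ, fun x _ y _ s t hs ht hst => ?_⟩
  have h1 := (aux_exp_affine (-(ε*β) * n ^ (β - 1)) (n ^ (-(1/2) : ℝ))).2
    (Set.mem_univ x) (Set.mem_univ y) hs ht hst
  have h2 := (aux_exp_affine (β*(-(ε*β) * n ^ (β - 1))) (β * n ^ (-(1/2) : ℝ))).2
    (Set.mem_univ x) (Set.mem_univ y) hs ht hst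
  have e2 : ∀ z : ℝ, β*(-(ε*β) * n ^ (β - 1)) + z * (β * n ^ (-(1/2) : ℝ)) =
    β * (-(ε*β) * n ^ (β - 1) + z * n ^ (-(1/2) : ℝ)) := fun z => by ring
  simp only [e2, smul_eq_mul] at h1 h2
  have h1' := mul_le_mul_of_nonneg_left h1 hn.le
  have h2' := mul_le_mul_of_nonneg_left h2 (by positivity : 0 ≤ ε * n ^ β)
  simp only [psi, vv, smul_eq_mul]
  have hs' : t = 1 - s := by linarith
  subst hs'
  linarith

lemma tendsto_rpow_neg' {p : ℝ} (hp : p < 0) : Tendsto (fun n : ℝ => n ^ p) atTop (nhds 0) := by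
  have := tendsto_rpow_neg_atTop (y := -p) (by linarith)
  simpa using this

lemma psi_tendsto (ε β z : ℝ) (hε : 0 ≤ ε) (h1 : 1/2 ≤ β) (h2 : β < 2/3) :
    Tendsto (fun n => psi ε β n z) atTop (nhds (-z^2/2)) := by
  have hv : Tendsto (fun n => vv (ε*β) β n z) atTop (nhds 0) := by
    have := ((tendsto_rpow_neg' (p := β-1) (by linarith)).const_mul (-(ε*β))).add
      ((tendsto_rpow_neg' (p := -(1/2)) (by norm_num)).const_mul z)
    simpa [vv] using this
  have hA : Tendsto (fun n => n * |vv (ε*β) β n z|^3) atTop (nhds 0) := by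
    have := ((((tendsto_rpow_neg' (p := β-2/3) (by linarith)).const_mul (-(ε*β))).add
      ((tendsto_rpow_neg' (p := -(1/6)) (by norm_num)).const_mul z)).abs).pow 3
    simp only [mul_zero, add_zero, abs_zero, ne_eq, OfNat.ofNat_ne_zero, not_false_eq_true, zero_pow] at this
    refine this.congr' ?_
    filter_upwards [eventually_gt_atTop 0] with n hn
    have e : -(ε*β) * n ^ (β - 2/3) + z * n ^ (-(1/6) : ℝ) = n ^ (1/3:ℝ) * vv (ε*β) β n z := by
      rw [vv, show β - 2/3 = 1/3 + (β - 1) by ring, show (-(1/6) : ℝ) = 1/3 + -(1/2) by norm_num,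
        rpow_add hn, rpow_add hn]; ring
    rw [e, abs_mul, mul_pow, abs_of_pos (rpow_pos_of_pos hn _), ← rpow_natCast, ← rpow_mul hn.le]
    norm_num
  have hB : Tendsto (fun n => n ^ β * (vv (ε*β) β n z)^2) atTop (nhds 0) := by
    have := (((tendsto_rpow_neg' (p := 3*β/2-1) (by linarith)).const_mul (-(ε*β))).add
      ((tendsto_rpow_neg' (p := (β-1)/2) (by linarith)).const_mul z)).pow 2
    simp only [mul_zero, add_zero, ne_eq, OfNat.ofNat_ne_zero, not_false_eq_true, zero_pow] at this
    refine this.congr' ?_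
    filter_upwards [eventually_gt_atTop 0] with n hn
    have e : -(ε*β) * n ^ (3*β/2-1) + z * n ^ ((β-1)/2) = n ^ (β/2) * vv (ε*β) β n z := by
      rw [vv, show 3*β/2-1 = β/2 + (β - 1) by ring, show (β-1)/2 = β/2 + -(1/2) by ring,
        rpow_add hn, rpow_add hn]; ring
    rw [e, mul_pow, ← rpow_natCast, ← rpow_mul hn.le]
    norm_num
  have hC := hA.add (hB.const_mul (ε * β^2))
  simp only [mul_zero, add_zero] at hC
  rw [tendsto_iff_norm_sub_tendsto_zero]
  refine squeeze_zero' (Eventually.of_forall fun _ => norm_nonneg _) ?_ hC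
  have hv1 : ∀ᶠ n in atTop, |vv (ε*β) β n z| < 1 := by
    have := hv.abs
    rw [abs_zero] at this
    exact this.eventually_lt_const one_pos
  filter_upwards [eventually_gt_atTop 0, hv1] with n hn hvn
  set v := vv (ε*β) β n z with hvdef
  have b1 : |exp v - 1 - v - v^2/2| ≤ |v|^3 := by
    have := Real.exp_bound hvn.le (n := 3) (by norm_num)
    simp [Finset.sum_range_succ, Nat.factorial] at this
    have e : exp v - 1 - v - v^2/2 = exp v - (1 + v + v^2/2) := by ring
    rw [e]
    refine this.trans ?_
    have : 0 ≤ |v|^3 := by positivity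
    nlinarith
  have b2 : |exp (β*v) - 1 - β*v| ≤ (β*v)^2 := by
    apply Real.abs_exp_sub_one_sub_id_le
    rw [abs_mul, abs_of_pos (by linarith : 0 < β)]
    nlinarith [abs_nonneg v]
  have key : psi ε β n z - (-z^2/2) = -(n * (exp v - 1 - v - v^2/2))
      - ε * n^β * (exp (β*v) - 1 - β*v) := by
    have e1 : n * n ^ (β-1) * n^(β-1) = n ^ (2*β-1) := by
      nth_rewrite 1 [← rpow_one n]
      rw [← rpow_add hn, ← rpow_add hn]; ring_nf
    have e2 : n * n ^ (β-1) = n ^ β := by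
      nth_rewrite 1 [← rpow_one n]
      rw [← rpow_add hn]; ring_nf
    have e3 : n * n ^ (-(1/2):ℝ) * n ^ (-(1/2):ℝ) = 1 := by
      nth_rewrite 1 [← rpow_one n]
      rw [← rpow_add hn, ← rpow_add hn]; norm_num
    rw [psi, ← hvdef, ← e1, ← e2]
    generalize exp v = E1
    generalize exp (β * v) = E2
    rw [hvdef, vv]
    linear_combination (-z^2/2) * e3
  rw [key, Real.norm_eq_abs]
  refine (abs_sub _ _).trans ?_
  rw [abs_neg, abs_mul, abs_mul, abs_of_pos hn, abs_of_nonneg (by positivity : 0 ≤ ε * n^β)]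
  have c1 := mul_le_mul_of_nonneg_left b1 hn.le
  have c2 := mul_le_mul_of_nonneg_left b2 (by positivity : 0 ≤ ε * n^β)
  have : ε * n^β * (β*v)^2 = ε * β^2 * (n^β * v^2) := by ring
  linarith

lemma integrable_dom : Integrable (fun z : ℝ => exp (20 - |z|)) := by
  have h : Integrable (fun z : ℝ => exp (-|z|)) := by
    rw [← integrableOn_univ, ← Set.Iic_union_Ioi (a := (0:ℝ))]
    refine IntegrableOn.union ?_ ?_
    · refine (integrableOn_exp_Iic 0).congr_fun (fun x hx => ?_) measurableSet_Iic
      simp only [abs_of_nonpos (Set.mem_Iic.1 hx), neg_neg]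
    · refine (exp_neg_integrableOn_Ioi 0 one_pos).congr_fun (fun x hx => ?_) measurableSet_Ioi
      simp only [abs_of_pos (Set.mem_Ioi.1 hx)]; ring_nf
  have := h.const_mul (exp 20)
  refine this.congr (Eventually.of_forall fun z => ?_)
  simp only [← exp_add]; ring_nf

lemma psi_continuous (ε β n : ℝ) : Continuous (psi ε β n) := by
  unfold psi vv
  fun_prop

lemma psi_integral_tendsto (ε β : ℝ) (hε : 0 ≤ ε) (h1 : 1/2 ≤ β) (h2 : β < 2/3) :
    Tendsto (fun n => ∫ z, exp (psi ε β n z)) atTop (nhds (√(2*π))) := by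
  have hg : ∫ z : ℝ, exp (-z^2/2) = √(2*π) := by
    have := integral_gaussian (1/2)
    rw [show π / (1/2) = 2*π by ring] at this
    rw [← this]
    congr 1; ext z; congr 1; ring
  rw [← hg]
  refine tendsto_integral_filter_of_dominated_convergence (fun z => exp (20 - |z|)) ?_ ?_
    integrable_dom ?_
  · exact Eventually.of_forall fun n => (continuous_exp.comp (psi_continuous ε β n)).aestronglyMeasurable
  · have ev : ∀ z : ℝ, ∀ᶠ n in atTop, |psi ε β n z - (-z^2/2)| < 1/2 := by
      intro z
      have := ((psi_tendsto ε β z hε h1 h2).sub_const (-z^2/2)).abs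
      rw [sub_self, abs_zero] at this
      exact this.eventually_lt_const (by norm_num)
    filter_upwards [ev 0, ev 3, ev (-3), eventually_gt_atTop 0] with n a0 a1 a2 hn
    refine Eventually.of_forall fun z => ?_
    rw [norm_of_nonneg (exp_pos _).le, exp_le_exp]
    refine aux_concave_bound _ (psi_concave ε β n hε hn) ?_ ?_ ?_ z
    · norm_num at a0 ⊢; exact a0.le
    · norm_num at a1 ⊢; exact a1.le
    · norm_num at a2 ⊢; exact a2.le
  · exact Eventually.of_forall fun z => (continuous_exp.tendsto _).comp (psi_tendsto ε β z hε h1 h2)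

lemma subst_lemma (α ε β n : ℝ) (hα : 0 < α) (hn : 0 < n) :
    ∫ q in Set.Ioi (0:ℝ), q ^ (α * n - 1) * exp (-(q ^ α) - ε * q ^ (α * β)) =
      α⁻¹ * n ^ (-(1/2):ℝ) * exp (n * log n - n - ε * n ^ β + (ε*β)^2 * n ^ (2*β-1) / 2) *
        ∫ z, exp (psi ε β n z) := by
  set b := n ^ (-(1/2):ℝ) with hb
  have hbpos : 0 < b := rpow_pos_of_pos hn _
  set f : ℝ → ℝ := fun z => exp (α⁻¹ * (log n + vv (ε*β) β n z)) with hf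
  have hderiv : ∀ z ∈ (Set.univ : Set ℝ), HasDerivWithinAt f (f z * (α⁻¹ * b)) Set.univ z := by
    intro z _
    apply HasDerivAt.hasDerivWithinAt
    have h1 : HasDerivAt (fun z => α⁻¹ * (log n + vv (ε*β) β n z)) (α⁻¹ * b) z := by
      have := ((((hasDerivAt_id z).mul_const b).const_add (-(ε*β) * n ^ (β-1))).const_add
        (log n)).const_mul α⁻¹
      simpa [vv, hb] using this
    exact h1.exp
  have hinj : Set.InjOn f Set.univ := by
    intro x _ y _ hxy
    simp only [hf, exp_eq_exp, vv, ← hb] at hxy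
    have := mul_left_cancel₀ (inv_ne_zero hα.ne') hxy
    have : x * b = y * b := by linarith
    exact mul_right_cancel₀ hbpos.ne' this
  have himg : f '' Set.univ = Set.Ioi 0 := by
    ext q
    simp only [Set.image_univ, Set.mem_range, Set.mem_Ioi]
    constructor
    · rintro ⟨z, rfl⟩; exact exp_pos _
    · intro hq
      refine ⟨(α * log q - log n + (ε*β) * n ^ (β-1)) / b, ?_⟩
      simp only [hf, vv, ← hb]
      rw [div_mul_cancel₀ _ hbpos.ne']
      rw [show α⁻¹ * (log n + (-(ε * β) * n ^ (β - 1) + (α * log q - log n + ε * β * n ^ (β - 1))))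
        = log q by field_simp; ring, exp_log hq]
  rw [← himg, integral_image_eq_integral_abs_deriv_smul MeasurableSet.univ hderiv hinj,
    Measure.restrict_univ, ← integral_const_mul]
  congr 1
  ext z
  have hfz : 0 < f z := exp_pos _
  rw [smul_eq_mul, abs_of_pos (by positivity)]
  set v := vv (ε*β) β n z with hv
  have hlog : ∀ p : ℝ, f z ^ p = exp (p * α⁻¹ * (log n + v)) := by
    intro p
    simp only [hf]
    rw [← exp_mul, ← hv]; ring_nf
  have e1 : f z ^ α = n * exp v := by
    rw [hlog, mul_inv_cancel₀ hα.ne', one_mul, exp_add, exp_log hn]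
  have e2 : f z ^ (α*β) = n^β * exp (β * v) := by
    rw [hlog, rpow_def_of_pos hn, ← exp_add]; congr 1; field_simp
  have e3 : f z ^ (α * n - 1) * f z = exp (n * (log n + v)) := by
    rw [← rpow_add_one hfz.ne', hlog]; congr 1; field_simp; ring
  rw [e1, e2]
  calc _ = α⁻¹ * b * ((f z ^ (α * n - 1) * f z) * exp (-(n * exp v) - ε * (n ^ β * exp (β * v)))) := by ring
    _ = _ := by
      rw [e3, ← exp_add, mul_assoc (α⁻¹ * b), ← exp_add]
      congr 2
      rw [psi, ← hv]; ring

lemma diff_tendsto (p : ℝ) (hp : 0 ≤ p) (hp1 : p < 1) :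
    Tendsto (fun n : ℝ => n ^ p - (n-1) ^ p) atTop (nhds 0) := by
  refine squeeze_zero' ?_ ?_ (tendsto_rpow_neg' (p := p - 1) (by linarith))
  · filter_upwards [eventually_gt_atTop 1] with n hn
    exact sub_nonneg.2 (rpow_le_rpow (by linarith) (by linarith) hp)
  · filter_upwards [eventually_gt_atTop 1] with n hn
    have hn0 : 0 < n := by linarith
    have hx0 : 0 < 1 - 1/n := by rw [sub_pos, div_lt_one hn0]; exact hn
    have h1 : (1 - 1/n) ≤ (1-1/n)^p := by
      have := rpow_le_rpow_of_exponent_ge hx0 (by simp [hn0.le]) hp1.le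
      rwa [rpow_one] at this
    have h2 : (n-1)^p = n^p * (1-1/n)^p := by
      rw [← mul_rpow hn0.le hx0.le]; congr 1; field_simp
    have h3 := mul_le_mul_of_nonneg_left h1 (rpow_pos_of_pos hn0 p).le
    have h4 : n^p * (1-1/n) = n^p - n^(p-1) := by rw [rpow_sub_one hn0.ne']; ring
    rw [h2]; linarith

/-- For `0 < α < 1`, `α/2 ≤ λ < 2α/3`, `ε > 0` and `β = λ/α`,
`I_N(ε) = ∫₀^∞ q^{N−1} e^{−q^α − ε q^λ} dq
  ∼ α⁻¹ Γ(N/α) exp(−ε(N/α−1)^β + (εβ)²(N/α−1)^{2β−1}/2)` as `N → ∞`. -/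
theorem IN_asymptotics_middle_lambda
    (α lam ε β : ℝ) (hα : 0 < α) (hα1 : α < 1)
    (hlow : α / 2 ≤ lam) (hhigh : lam < 2 * α / 3) (hε : 0 < ε) (hβ : β = lam / α) :
    Tendsto (fun N : ℝ =>
        (∫ q in Set.Ioi (0:ℝ), q ^ (N - 1) * Real.exp (-(q ^ α) - ε * q ^ lam)) /
          (α⁻¹ * Real.Gamma (N / α) *
            Real.exp (-ε * (N / α - 1) ^ β + (ε * β) ^ 2 * (N / α - 1) ^ (2 * β - 1) / 2)))
      atTop (nhds 1) := by
  have hlam : lam = α * β := by rw [hβ]; field_simp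
  have hb1 : 1/2 ≤ β := by rw [hβ, le_div_iff₀ hα]; linarith
  have hb2 : β < 2/3 := by rw [hβ, div_lt_iff₀ hα]; linarith
  have hpi : √(2*π) ≠ 0 := by positivity
  have hG := psi_integral_tendsto ε β hε.le hb1 hb2
  have hG0 := psi_integral_tendsto 0 β le_rfl hb1 hb2
  have hD := (((diff_tendsto β (by linarith) (by linarith)).const_mul (-ε)).add
    ((diff_tendsto (2*β-1) (by linarith) (by linarith)).const_mul ((ε*β)^2/2)))
  simp only [mul_zero, add_zero] at hD
  have hlim := (hG.div hG0 hpi).mul ((continuous_exp.tendsto 0).comp hD)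
  rw [exp_zero, div_self hpi, mul_one] at hlim
  have hNa : Tendsto (fun N : ℝ => N / α) atTop atTop := tendsto_id.atTop_div_const hα
  have hne : ∀ᶠ n in atTop, (∫ z, exp (psi 0 β n z)) ≠ 0 := hG0.eventually_ne hpi
  refine (hlim.comp hNa).congr' ?_
  filter_upwards [eventually_gt_atTop 0, hNa.eventually hne] with N hN hne
  set n := N / α with hn
  have hn0 : 0 < n := div_pos hN hα
  have hNn : N = α * n := by rw [hn]; field_simp
  have hGam : Real.Gamma n = n ^ (-(1/2):ℝ) * exp (n * log n - n) * ∫ z, exp (psi 0 β n z) := by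
    have := subst_lemma 1 0 β n one_pos hn0
    simp only [one_mul, rpow_one, zero_mul, sub_zero, inv_one] at this
    rw [Real.Gamma_eq_integral hn0]
    rw [show n * log n - n = n * log n - n + 0 ^ 2 * n ^ (2 * β - 1) / 2 by simp, ← this]
    congr 1; ext x; ring
  simp only [Function.comp, Pi.div_apply, ← hn]
  rw [hGam, hlam, show N - 1 = α * n - 1 by rw [← hNn], subst_lemma α ε β n hα hn0]
  have hpn := (rpow_pos_of_pos hn0 (-(1/2):ℝ)).ne'
  rw [show n * log n - n - ε * n ^ β + (ε*β)^2 * n ^ (2*β-1) / 2 = (n * log n - n) +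
    ((-ε * (n^β - (n-1)^β) + (ε*β)^2/2 * (n^(2*β-1) - (n-1)^(2*β-1))) +
     (-ε * (n - 1) ^ β + (ε * β) ^ 2 * (n - 1) ^ (2 * β - 1) / 2)) by ring, exp_add (n * log n - n),
     exp_add (-ε * (n^β - (n-1)^β) + (ε*β)^2/2 * (n^(2*β-1) - (n-1)^(2*β-1)))]
  have x1 := exp_ne_zero (n * log n - n)
  have x2 := exp_ne_zero (-ε * (n - 1) ^ β + (ε * β) ^ 2 * (n - 1) ^ (2 * β - 1) / 2)
  generalize exp (n * log n - n) = X1 at *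
  generalize exp (-ε * (n - 1) ^ β + (ε * β) ^ 2 * (n - 1) ^ (2 * β - 1) / 2) = X2 at *
  generalize exp (-ε * (n^β - (n-1)^β) + (ε*β)^2/2 * (n^(2*β-1) - (n-1)^(2*β-1))) = X3 at *
  generalize n ^ (-(1/2):ℝ) = X4 at *
  field_simp
end

section
/- Let 0 < α < 1. Then as q → ∞, ∫_q^∞ (r − q)³ e^{−2 r^α} dr ∼ (3/(8α⁴)) · q^{4(1−α)} · e^{−2 q^α}; that is, the ratio of the left-hand side to the right-hand side tends to 1 as q → ∞. -/
open Real MeasureTheory Filter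

lemma tia_lim (α u : ℝ) :
    Tendsto (fun x : ℝ => x * ((1 + u * x⁻¹) ^ α - 1)) atTop (nhds (α * u)) := by
  have h1 : HasDerivAt (fun t : ℝ => (1 + u * t) ^ α) (α * u) 0 := by
    have h2 : HasDerivAt (fun t : ℝ => 1 + u * t) u 0 := by
      simpa using ((hasDerivAt_id (0:ℝ)).const_mul u).const_add 1
    have h3 := h2.rpow_const (p := α) (Or.inl (by simp))
    convert h3 using 1
    simp [mul_comm]
  have h4 := h1.tendsto_slope_zero_right.comp tendsto_inv_atTop_nhdsGT_zero
  refine h4.congr fun x => ?_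
  simp

lemma tia_bound (α u x : ℝ) (hα : 0 < α) (hα1 : α < 1) (hu : 0 < u) (hx : 1 ≤ x) :
    u ^ α - 1 ≤ x * ((1 + u * x⁻¹) ^ α - 1) := by
  have hx0 : 0 < x := by linarith
  have hi : x⁻¹ ≤ 1 := inv_le_one_of_one_le₀ hx
  have hA : (1 + u) ∈ Set.Ici (0:ℝ) := Set.mem_Ici.2 (by linarith)
  have hB : (1:ℝ) ∈ Set.Ici (0:ℝ) := Set.mem_Ici.2 (by norm_num)
  have hC : 0 ≤ x⁻¹ := by positivity
  have hD : 0 ≤ 1 - x⁻¹ := by linarith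
  have h := (Real.concaveOn_rpow hα.le hα1.le).2 hA hB hC hD (by ring)
  simp only [smul_eq_mul, Real.one_rpow] at h
  have e : x⁻¹ * (1 + u) + (1 - x⁻¹) * 1 = 1 + u * x⁻¹ := by ring
  rw [e] at h
  have h2 : u ^ α ≤ (1 + u) ^ α := Real.rpow_le_rpow hu.le (by linarith) hα.le
  have h3 := mul_le_mul_of_nonneg_left h hx0.le
  have h4 : x * (x⁻¹ * (1 + u) ^ α + (1 - x⁻¹) * 1) = (1 + u) ^ α + x - 1 := by
    field_simp
    ring
  linarith

lemma tia_dct (α : ℝ) (hα : 0 < α) (hα1 : α < 1) :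
    Tendsto (fun x : ℝ => ∫ u in Set.Ioi (0:ℝ),
      u ^ 3 * Real.exp (-2 * (x * ((1 + u * x⁻¹) ^ α - 1)))) atTop (nhds (3 / (8 * α ^ 4))) := by
  have hval : ∫ u in Set.Ioi (0:ℝ), u ^ 3 * Real.exp (-2 * (α * u)) = 3 / (8 * α ^ 4) := by
    have h := integral_rpow_mul_exp_neg_mul_rpow (p := 1) (q := 3) (b := 2 * α) one_pos
      (by norm_num) (by positivity)
    have hG : Real.Gamma 4 = 6 := by
      rw [show (4:ℝ) = ((3:ℕ):ℝ) + 1 by norm_num, Real.Gamma_nat_eq_factorial]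
      norm_num [Nat.factorial]
    have e : ∫ u in Set.Ioi (0:ℝ), u ^ 3 * Real.exp (-2 * (α * u)) =
        ∫ u in Set.Ioi (0:ℝ), u ^ (3:ℝ) * Real.exp (-(2 * α) * u ^ (1:ℝ)) := by
      congr 1; ext u
      rw [Real.rpow_one, show (3:ℝ) = ((3:ℕ):ℝ) by norm_num, Real.rpow_natCast]
      congr 2; ring
    rw [e, h]
    have e2 : ((3:ℝ) + 1) / 1 = 4 := by norm_num
    have e3 : (-((3:ℝ) + 1)) / 1 = -((4:ℕ):ℝ) := by norm_num
    rw [e2, e3, hG, Real.rpow_neg (by positivity), Real.rpow_natCast]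
    field_simp
    norm_num
  rw [← hval]
  refine tendsto_integral_filter_of_dominated_convergence
    (fun u => Real.exp 2 * (u ^ (3:ℝ) * Real.exp (-2 * u ^ α))) ?_ ?_ ?_ ?_
  · refine Eventually.of_forall fun x => Measurable.aestronglyMeasurable ?_
    fun_prop
  · filter_upwards [eventually_ge_atTop 1] with x hx
    refine (ae_restrict_mem measurableSet_Ioi).mono fun u hu => ?_
    have hu0 : 0 < u := hu
    have hb := tia_bound α u x hα hα1 hu hx
    rw [Real.norm_of_nonneg (by positivity), show (3:ℝ) = ((3:ℕ):ℝ) by norm_num, Real.rpow_natCast,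
      mul_left_comm (Real.exp 2), ← Real.exp_add]
    gcongr
    linarith
  · exact (integrableOn_rpow_mul_exp_neg_mul_rpow (by norm_num) hα two_pos).const_mul _
  · refine Eventually.of_forall fun u => ?_
    exact (((tia_lim α u).const_mul (-2)).rexp).const_mul _

lemma tia_subst (α q : ℝ) (hq : 0 < q) :
    (∫ r in Set.Ioi q, (r - q) ^ 3 * Real.exp (-2 * r ^ α)) =
      q ^ (4 * (1 - α)) * Real.exp (-2 * q ^ α) * ∫ u in Set.Ioi (0:ℝ),
      u ^ 3 * Real.exp (-2 * (q ^ α * ((1 + u * (q ^ α)⁻¹) ^ α - 1))) := by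
  set s := q ^ (1 - α) with hs
  have hs0 : 0 < s := Real.rpow_pos_of_pos hq _
  have hqa : 0 < q ^ α := Real.rpow_pos_of_pos hq _
  have h4 : q ^ (4 * (1 - α)) = s ^ 4 := by
    rw [hs, ← Real.rpow_natCast, ← Real.rpow_mul hq.le]; congr 1; push_cast; ring
  have hsq : s = q * (q ^ α)⁻¹ := by
    rw [hs, Real.rpow_sub hq, Real.rpow_one, div_eq_mul_inv]
  have h1 := (measurePreserving_add_right (volume : Measure ℝ) q).setIntegral_preimage_emb
    (measurableEmbedding_addRight q) (fun r => (r - q) ^ 3 * Real.exp (-2 * r ^ α)) (Set.Ioi q)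
  have hpre : (fun x => x + q) ⁻¹' Set.Ioi q = Set.Ioi 0 := by ext x; simp
  rw [hpre] at h1
  rw [← h1]
  have h2 := integral_comp_mul_left_Ioi' (fun r => (r + q - q) ^ 3 * Real.exp (-2 * (r + q) ^ α)) 0 hs0
  rw [mul_zero] at h2
  rw [← h2, smul_eq_mul, h4, ← integral_const_mul, ← integral_const_mul]
  refine setIntegral_congr_fun measurableSet_Ioi fun u hu => ?_
  have hu0 : 0 < u := hu
  have e1 : s * u + q = q * (1 + u * (q ^ α)⁻¹) := by rw [hsq]; ring
  have e2 : (s * u + q) ^ α = q ^ α * (1 + u * (q ^ α)⁻¹) ^ α := by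
    rw [e1, Real.mul_rpow hq.le (by positivity)]
  have e3 : Real.exp (-2 * (s * u + q) ^ α) = Real.exp (-2 * q ^ α) *
      Real.exp (-2 * (q ^ α * ((1 + u * (q ^ α)⁻¹) ^ α - 1))) := by
    rw [e2, ← Real.exp_add]; congr 1; ring
  simp only [e3]
  ring

/-- Laplace-type asymptotics: for `0 < α < 1`,
`∫_q^∞ (r − q)³ e^{−2r^α} dr ∼ (3/(8α⁴)) q^{4(1−α)} e^{−2q^α}` as `q → ∞`. -/
theorem tail_integral_asymptotics (α : ℝ) (hα : 0 < α) (hα1 : α < 1) :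
    Tendsto (fun q : ℝ =>
        (∫ r in Set.Ioi q, (r - q) ^ 3 * Real.exp (-2 * r ^ α)) /
          ((3 / (8 * α ^ 4)) * q ^ (4 * (1 - α)) * Real.exp (-2 * q ^ α)))
      atTop (nhds 1) := by
  have hc : (3 / (8 * α ^ 4)) ≠ 0 := by positivity
  have h := ((tia_dct α hα hα1).comp (tendsto_rpow_atTop hα)).div_const (3 / (8 * α ^ 4))
  rw [div_self hc] at h
  refine h.congr' ?_
  filter_upwards [eventually_gt_atTop 0] with q hq
  rw [tia_subst α q hq]
  have h1 : q ^ (4 * (1 - α)) ≠ 0 := (Real.rpow_pos_of_pos hq _).ne'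
  have h2 := (Real.exp_pos (-2 * q ^ α)).ne'
  simp only [Function.comp]
  generalize (∫ u in Set.Ioi (0:ℝ),
      u ^ 3 * Real.exp (-2 * (q ^ α * ((1 + u * (q ^ α)⁻¹) ^ α - 1)))) = I
  rw [show 3 / (8 * α ^ 4) * q ^ (4 * (1 - α)) * Real.exp (-2 * q ^ α) =
    q ^ (4 * (1 - α)) * Real.exp (-2 * q ^ α) * (3 / (8 * α ^ 4)) by ring,
    mul_div_mul_left _ _ (mul_ne_zero h1 h2)]
end
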